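/- arXiv:2404.02777 — 4 statements merged into one kernel-verified Lean document; each statement's English description precedes it below -/
import Mathlib

section
/- Every nilpotent square matrix over a field is the sum of an idempotent matrix and a torsion matrix. -/
open Polynomial DirectSum

/-- Multiplication by `X` on `M` is the sum of an idempotent and a torsion endomorphism. -/
def GoodX (F : Type*) [Field F] (M : Type*) [AddCommGroup M] [Module F M] [Module F[X] M] : Prop :=
  ∃ E T : Module.End F M, E * E = E ∧ (∃ s : ℕ, 1 ≤ s ∧ T ^ s = 1) ∧
    ∀ m : M, (X : F[X]) • m = E m + T m

/-- The case of a single nilpotent Jordan block. -/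
theorem cyclic_case {F M : Type*} [Field F] [AddCommGroup M] [Module F M]
    (f : Module.End F M) (v : M) (k : ℕ) (b : Module.Basis (Fin (k + 1)) F M)
    (hb : ∀ i, b i = (f ^ (i : ℕ)) v) (hf : (f ^ (k + 1)) v = 0) :
    ∃ E T : Module.End F M, E * E = E ∧ (∃ s : ℕ, 1 ≤ s ∧ T ^ s = 1) ∧ f = E + T := by
  set φ : M →ₗ[F] F := b.coord (Fin.last k) with hφ
  set w : M := ∑ i ∈ Finset.range (k + 1), (f ^ i) v with hw
  have hφi : ∀ i, i < k → φ ((f ^ i) v) = 0 := by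
    intro i hi
    have h := hb ⟨i, by omega⟩
    simp only at h
    rw [← h, hφ, Module.Basis.coord_apply, Module.Basis.repr_self, Finsupp.single_eq_of_ne]
    intro h'
    have := congrArg Fin.val h'
    simp at this
    omega
  have hφk : φ ((f ^ k) v) = 1 := by
    have h := hb (Fin.last k)
    simp only [Fin.val_last] at h
    rw [← h, hφ, Module.Basis.coord_apply, Module.Basis.repr_self, Finsupp.single_eq_same]
  have hφw : φ w = 1 := by
    rw [hw, map_sum, Finset.sum_range_succ, hφk, Finset.sum_eq_zero, zero_add]
    intro i hi
    exact hφi i (Finset.mem_range.mp hi)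
  have hfw : f w = w - v := by
    have h1 : f w = ∑ i ∈ Finset.range (k + 1), (f ^ (i + 1)) v := by
      rw [hw, map_sum]
      refine Finset.sum_congr rfl fun i _ => ?_
      rw [pow_succ', Module.End.mul_apply]
    have h2 := Finset.sum_range_succ' (fun i => (f ^ i) v) (k + 1)
    have h3 := Finset.sum_range_succ (fun i => (f ^ i) v) (k + 1)
    rw [h3, ← h1, ← hw, hf] at h2
    simp at h2
    exact eq_sub_of_add_eq h2.symm
  set E : Module.End F M := φ.smulRight w with hE
  have hEa : ∀ x, E x = φ x • w := fun x => rfl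
  set T : Module.End F M := f - E with hT
  have hTa : ∀ x, T x = f x - φ x • w := fun x => rfl
  have hTi : ∀ i, i ≤ k → (T ^ i) v = (f ^ i) v := by
    intro i
    induction i with
    | zero => intro _; simp
    | succ i ih =>
      intro hi
      rw [pow_succ', Module.End.mul_apply, ih (by omega), hTa, hφi i (by omega), zero_smul,
        sub_zero, pow_succ', Module.End.mul_apply]
  have hT1 : (T ^ (k + 2)) v = v := by
    rw [pow_succ', pow_succ', Module.End.mul_apply, Module.End.mul_apply, hTi k le_rfl, hTa ((f ^ k) v),
      hφk, ← Module.End.mul_apply, ← pow_succ', hf, one_smul, zero_sub, map_neg, hTa, hφw, hfw]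
    simp
  refine ⟨E, T, ?_, ⟨k + 2, by omega, ?_⟩, ?_⟩
  · ext x
    rw [Module.End.mul_apply, hEa, hEa, map_smul, hφw, smul_eq_mul, mul_one]
  · refine b.ext fun i => ?_
    rw [hb, ← hTi i (by omega), ← Module.End.mul_apply, ← pow_add, add_comm, pow_add,
      Module.End.mul_apply, hT1, Module.End.one_apply]
  · rw [hT]; abel

theorem good_adjoinRoot (F : Type*) [Field F] (k : ℕ) :
    GoodX F (F[X] ⧸ Ideal.span {(X : F[X]) ^ (k + 1)}) := by
  have hm : ((X : F[X]) ^ (k + 1)).Monic := monic_X_pow _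
  let f : Module.End F (AdjoinRoot ((X : F[X]) ^ (k + 1))) :=
    LinearMap.mulLeft F (AdjoinRoot.root _)
  have hpow : ∀ i, (f ^ i) 1 = (AdjoinRoot.root ((X : F[X]) ^ (k + 1))) ^ i := by
    intro i
    simp [f, LinearMap.pow_mulLeft]
  obtain ⟨E, T, h1, h2, h3⟩ := cyclic_case f 1 k
    ((AdjoinRoot.powerBasis' hm).basis.reindex (finCongr (by simp)))
    (by intro i; rw [hpow]; simp) (by
      rw [hpow]
      have := AdjoinRoot.mk_self (f := (X : F[X]) ^ (k + 1))
      rwa [map_pow, AdjoinRoot.mk_X] at this)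
  refine ⟨E, T, h1, h2, fun m => ?_⟩
  have : (X : F[X]) • m = f m := by
    obtain ⟨p, rfl⟩ := Ideal.Quotient.mk_surjective m
    rfl
  rw [this, h3]
  rfl

theorem good_quot (F : Type*) [Field F] (q : F[X]) (k : ℕ) (h : q ∣ X ^ k) :
    GoodX F (F[X] ⧸ Ideal.span {q}) := by
  obtain ⟨j, -, hj⟩ := (dvd_prime_pow prime_X k).1 h
  rw [Ideal.span_singleton_eq_span_singleton.2 hj]
  cases j with
  | succ j => exact good_adjoinRoot F j
  | zero =>
    have : Subsingleton (F[X] ⧸ Ideal.span {(X : F[X]) ^ 0}) := by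
      rw [Ideal.Quotient.subsingleton_iff]; simp
    exact ⟨0, 0, by simp, ⟨1, le_rfl, Subsingleton.elim _ _⟩, fun m => Subsingleton.elim _ _⟩

theorem lmap_pow' {F ι : Type*} [Field F] {M : ι → Type*} [∀ i, AddCommGroup (M i)]
    [∀ i, Module F (M i)] (T : ∀ i, Module.End F (M i)) (s : ℕ) (x : ⨁ i, M i) (i : ι) :
    ((DirectSum.lmap T : Module.End F (⨁ i, M i)) ^ s) x i = (T i ^ s) (x i) := by
  induction s with
  | zero => simp
  | succ s ih => rw [pow_succ', pow_succ', Module.End.mul_apply, Module.End.mul_apply, ← ih]; rfl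

theorem good_sum {F ι : Type*} [Field F] [Fintype ι] {M : ι → Type*} [∀ i, AddCommGroup (M i)]
    [∀ i, Module F (M i)] [∀ i, Module F[X] (M i)] (h : ∀ i, GoodX F (M i)) :
    GoodX F (⨁ i, M i) := by
  choose E T h1 h2 h3 using h
  choose s hs1 hs2 using h2
  refine ⟨DirectSum.lmap E, DirectSum.lmap T, ?_, ⟨∏ i, s i, ?_, ?_⟩, ?_⟩
  · refine LinearMap.ext fun x => DFinsupp.ext fun j => ?_
    exact LinearMap.congr_fun (h1 j) (x j)
  · exact Nat.succ_le_of_lt (Finset.prod_pos fun i _ => Nat.lt_of_succ_le (hs1 i))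
  · refine LinearMap.ext fun x => DFinsupp.ext fun j => ?_
    refine (lmap_pow' T _ x j).trans ?_
    obtain ⟨c, hc⟩ := Finset.dvd_prod_of_mem s (Finset.mem_univ j)
    rw [hc, pow_mul, hs2, one_pow]
    rfl
  · intro m
    exact DFinsupp.ext fun j => h3 j _

/-- Every nilpotent square matrix over a field is the sum of an idempotent
matrix and a torsion matrix. -/
theorem nilpotent_eq_idempotent_add_torsion
    {F : Type*} [Field F] {n : ℕ} (A : Matrix (Fin n) (Fin n) F)
    (hA : IsNilpotent A) :
    ∃ E T : Matrix (Fin n) (Fin n) F,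
      IsIdempotentElem E ∧ IsUnit T ∧ (∃ s : ℕ, 1 ≤ s ∧ T ^ s = 1) ∧
      A = E + T := by
  let L := Matrix.toLinAlgEquiv' (R := F) (n := Fin n)
  obtain ⟨k, hk⟩ := hA
  let a : Module.End F (Fin n → F) := L A
  have ha : a ^ k = 0 := by simp only [a]; rw [← map_pow, hk, map_zero]
  have hX : ∀ m : Module.AEval F (Fin n → F) a, (X ^ k : F[X]) • m = 0 := by
    intro m
    obtain ⟨m, rfl⟩ := (Module.AEval.of F (Fin n → F) a).surjective m
    rw [Module.AEval.X_pow_smul_of, ha, zero_smul, map_zero]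
  have htors : Module.IsTorsion F[X] (Module.AEval F (Fin n → F) a) := by
    intro m
    exact ⟨⟨X ^ k, mem_nonZeroDivisors_of_ne_zero (pow_ne_zero _ X_ne_zero)⟩, hX m⟩
  obtain ⟨ι, _, p, hp, e, ⟨g⟩⟩ := Module.equiv_directSum_of_isTorsion htors
  classical
  have hgood : GoodX F (⨁ i, F[X] ⧸ Ideal.span {p i ^ e i}) := by
    refine good_sum fun i => good_quot F _ k ?_
    rw [← Ideal.mem_span_singleton, ← Ideal.Quotient.eq_zero_iff_mem]
    have h := congrArg g (hX (g.symm (DirectSum.of (fun i => F[X] ⧸ Ideal.span {p i ^ e i}) i 1)))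
    rw [map_smul, g.apply_symm_apply, map_zero] at h
    have h' := DFinsupp.ext_iff.1 h i
    have h'' : (X ^ k : F[X]) • (DirectSum.of (fun i => F[X] ⧸ Ideal.span {p i ^ e i}) i 1) i
      = 0 := h'
    rw [DirectSum.of_eq_same] at h''
    rw [← h'']
    exact (mul_one _).symm
  obtain ⟨E, T, h1, ⟨s, hs1, hs2⟩, h3⟩ := hgood
  let g' : (Fin n → F) ≃ₗ[F] ⨁ i, F[X] ⧸ Ideal.span {p i ^ e i} :=
    (Module.AEval.of F (Fin n → F) a).trans
      { g with
        map_smul' := by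
          intro c x
          have h := g.map_smul (C c) x
          rw [Module.AEval.C_smul] at h
          refine h.trans ?_
          refine DFinsupp.ext fun j => ?_
          change C c • (g x j) = c • (g x j)
          obtain ⟨q, hq⟩ := Ideal.Quotient.mk_surjective (g x j)
          rw [← hq]
          change Ideal.Quotient.mk _ (C c * q) = Ideal.Quotient.mk _ (c • q)
          rw [smul_eq_C_mul] }
  let Ψ := (g'.symm.conjAlgEquiv F).trans L.symm
  have hg : ∀ m, g' (a m) = E (g' m) + T (g' m) := by
    intro m
    rw [← h3]
    have h := g.map_smul X (Module.AEval.of F (Fin n → F) a m)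
    rw [Module.AEval.X_smul_of] at h
    exact h
  have hTs : (Ψ T) ^ s = 1 := by rw [← map_pow, hs2, map_one]
  refine ⟨Ψ E, Ψ T, ?_, IsUnit.of_pow_eq_one hTs (by omega), ⟨s, hs1, hTs⟩, ?_⟩
  · change _ * _ = _
    rw [← map_mul, h1]
  · rw [← map_add]
    apply L.injective
    change a = L (L.symm _)
    rw [L.apply_symm_apply]
    refine LinearMap.ext fun m => ?_
    apply g'.injective
    rw [hg]
    simp
end

section
/- Over an algebraically closed field, every periodic matrix A ∈ M_n(F) with rank(A) ≥ n/2 is the sum of a torsion matrix and a square-zero matrix. -/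
open Polynomial Module

namespace PTS

/-- A is the sum of a torsion endomorphism and a square-zero one. -/
def Good {F V : Type*} [Field F] [AddCommGroup V] [Module F V] (A : End F V) : Prop :=
  ∃ T : End F V, (∃ s : ℕ, 1 ≤ s ∧ T ^ s = 1) ∧ (A - T) ^ 2 = 0

/-- Strong version, with torsion part annihilated by a divisor of `X^s-1` coprime to a given
polynomial. -/
def Strong {F V : Type*} [Field F] [AddCommGroup V] [Module F V] (A : End F V) : Prop :=
  ∀ q : F[X], q ≠ 0 → ∃ (T : End F V) (p : F[X]) (s : ℕ), 1 ≤ s ∧ p ∣ X ^ s - 1 ∧ IsCoprime p q ∧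
    aeval T p = 0 ∧ (A - T) ^ 2 = 0

section
variable {F V : Type*} [Field F] [AddCommGroup V] [Module F V]

lemma Strong.good {A : End F V} (h : Strong A) : Good A := by
  obtain ⟨T, p, s, hs, ⟨r, hr⟩, -, hT, hN⟩ := h 1 one_ne_zero
  refine ⟨T, ⟨s, hs, ?_⟩, hN⟩
  have := congrArg (aeval T) hr
  rw [map_mul, hT, zero_mul] at this
  simpa [sub_eq_zero] using this

lemma exists_root [IsAlgClosed F] [CharZero F] (S : Finset F) :
    ∃ c : F, (∃ s : ℕ, 1 ≤ s ∧ c ^ s = 1) ∧ c ∉ S := by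
  set N := S.sup orderOf + 1 with hN
  obtain ⟨c, hc⟩ := HasEnoughRootsOfUnity.exists_primitiveRoot F N
  refine ⟨c, ⟨N, by omega, hc.pow_eq_one⟩, fun h => ?_⟩
  have := Finset.le_sup (f := orderOf) h
  rw [← hc.eq_orderOf] at this
  omega

lemma cyc [IsAlgClosed F] [CharZero F] (A : End F V) (k : ℕ) (u : V) (φ : V →ₗ[F] F)
    (hk : A ^ (k + 2) = 0) (h0 : ∀ i, i < k + 1 → φ ((A ^ i) u) = 0)
    (h1 : φ ((A ^ (k + 1)) u) = 1)
    (hspan : ∀ W : Submodule F V, (∀ i, i < k + 2 → (A ^ i) u ∈ W) → W = ⊤) : Strong A := by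
  classical
  intro q hq
  obtain ⟨c, ⟨s, hs, hcs⟩, hc⟩ := exists_root (q.roots.toFinset.image (fun r => r ^ (k + 2)))
  set N : End F V := c • φ.smulRight u with hN
  have hNv : ∀ v, N v = (c * φ v) • u := by intro v; simp [hN, mul_smul]
  have hTi : ∀ i, i < k + 2 → ((A + N) ^ i) u = (A ^ i) u := by
    intro i
    induction i with
    | zero => simp
    | succ i ih =>
      intro hi
      rw [pow_succ', Module.End.mul_apply, ih (by omega), LinearMap.add_apply, hNv,
        h0 i (by omega), pow_succ', Module.End.mul_apply]
      simp
  have hTk : ((A + N) ^ (k + 2)) u = c • u := by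
    rw [pow_succ', Module.End.mul_apply, hTi _ (by omega), LinearMap.add_apply, hNv, h1,
      ← Module.End.mul_apply, ← pow_succ', hk]
    simp
  refine ⟨A + N, X ^ (k + 2) - C c, (k + 2) * s, ?_, ?_, ?_, ?_, ?_⟩
  · exact Nat.one_le_iff_ne_zero.2 (by positivity)
  · have := sub_dvd_pow_sub_pow (X ^ (k + 2) : F[X]) (C c) s
    rwa [← C_pow, hcs, C_1, ← pow_mul] at this
  · refine (Polynomial.isCoprime_iff_aeval_ne_zero_of_isAlgClosed (k := F) F _ _).2 ?_
    intro a
    by_contra! h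
    apply hc
    simp only [Finset.mem_image, Multiset.mem_toFinset]
    refine ⟨a, (mem_roots hq).2 (by simpa using h.2), ?_⟩
    simpa [sub_eq_zero] using h.1
  · have := hspan (LinearMap.ker (aeval (A + N) (X ^ (k + 2) - C c))) ?_
    · exact LinearMap.ker_eq_top.1 this
    · intro i hi
      rw [← hTi i hi, LinearMap.mem_ker]
      have e : aeval (A + N) (X ^ (k + 2) - C c) * (A + N) ^ i
          = (A + N) ^ i * aeval (A + N) (X ^ (k + 2) - C c) := by
        have : (A + N) ^ i = aeval (A + N) (X ^ i : F[X]) := by simp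
        rw [this, ← map_mul, ← map_mul, mul_comm]
      rw [← Module.End.mul_apply, e, Module.End.mul_apply]
      have : (aeval (A + N) (X ^ (k + 2) - C c)) u = 0 := by
        simp [hTk, Module.algebraMap_end_apply]
      rw [this, map_zero]
  · have : A - (A + N) = -N := by abel
    rw [this, neg_sq]
    ext v
    have h00 : φ u = 0 := by simpa using h0 0 (by omega)
    rw [pow_two, Module.End.mul_apply, hNv (N v), hNv v]
    simp [h00]

lemma aeval_comm {V' : Type*} [AddCommGroup V'] [Module F V'] (T : End F V) (T' : End F V')
    (f : V →ₗ[F] V') (h : ∀ v, f (T v) = T' (f v)) (p : F[X]) (v : V) :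
    f (aeval T p v) = aeval T' p (f v) := by
  induction p using Polynomial.induction_on' generalizing v with
  | add p q hp hq => simp [hp, hq]
  | monomial n a =>
    simp only [aeval_monomial, Module.End.mul_apply, Module.algebraMap_end_apply, map_smul]
    congr 1
    induction n generalizing v with
    | zero => simp
    | succ n ih => rw [pow_succ, pow_succ, Module.End.mul_apply, Module.End.mul_apply, ih, h]

lemma tri {A : End F V} (U : Submodule F V) (hU : ∀ x ∈ U, A x ∈ U)
    (h1 : Strong (A.restrict hU)) (h2 : Strong (U.mapQ U A hU)) : Strong A := by
  intro q hq
  obtain ⟨T1, p1, s1, hs1, hd1, hc1, ha1, hn1⟩ := h1 q hq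
  have hp1 : p1 ≠ 0 := by
    rintro rfl
    rw [zero_dvd_iff] at hd1
    exact X_pow_sub_C_ne_zero hs1 (1 : F) (by simpa using hd1)
  obtain ⟨T2, p2, s2, hs2, hd2, hc2, ha2, hn2⟩ := h2 (q * p1) (mul_ne_zero hq hp1)
  obtain ⟨π, hπ⟩ := U.subtype.exists_leftInverse_of_injective U.ker_subtype
  obtain ⟨σ0, hσ0⟩ := U.mkQ.exists_rightInverse_of_surjective U.range_mkQ
  have hπ' : ∀ x : U, π x = x := fun x => congrArg (fun f => f x) hπ
  have hσ0' : ∀ x, U.mkQ (σ0 x) = x := fun x => congrArg (fun f => f x) hσ0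
  set σ : (V ⧸ U) →ₗ[F] V := σ0 - U.subtype ∘ₗ π ∘ₗ σ0 with hσ
  have hqU : ∀ x : U, U.mkQ (x : V) = 0 := fun x => by simp
  have hσ1 : ∀ x, U.mkQ (σ x) = x := fun x => by
    simp only [hσ, LinearMap.sub_apply, LinearMap.comp_apply, map_sub, hσ0', Submodule.subtype_apply,
      hqU, sub_zero]
  have hσ2 : ∀ x, π (σ x) = 0 := fun x => by
    simp only [hσ, LinearMap.sub_apply, LinearMap.comp_apply, map_sub, Submodule.subtype_apply,
      hπ', sub_self]
  set N1 := A.restrict hU - T1 with hN1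
  set N2 := U.mapQ U A hU - T2 with hN2
  have hN1' : ∀ x, N1 (N1 x) = 0 := fun x => by
    rw [← Module.End.mul_apply, ← pow_two, hn1]; rfl
  have hN2' : ∀ x, N2 (N2 x) = 0 := fun x => by
    rw [← Module.End.mul_apply, ← pow_two, hn2]; rfl
  set N : End F V := U.subtype ∘ₗ N1 ∘ₗ π + σ ∘ₗ N2 ∘ₗ U.mkQ with hN
  have hNv : ∀ v, N v = (N1 (π v) : V) + σ (N2 (U.mkQ v)) := fun v => rfl
  have hTU : ∀ x : U, U.subtype (T1 x) = (A - N) (U.subtype x) := fun x => by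
    simp only [LinearMap.sub_apply, hNv, Submodule.subtype_apply, hπ', hqU, map_zero, add_zero]
    simp [hN1]
  have hTq : ∀ v, U.mkQ ((A - N) v) = T2 (U.mkQ v) := fun v => by
    simp only [LinearMap.sub_apply, hNv, map_sub, map_add, hqU, hσ1, zero_add]
    simp [hN2]
  refine ⟨A - N, p1 * p2, s1 * s2, Nat.mul_pos hs1 hs2, ?_, ?_, ?_, ?_⟩
  · refine IsCoprime.mul_dvd (hc2.of_mul_right_right.symm) (hd1.trans ?_) (hd2.trans ?_)
    · have := sub_dvd_pow_sub_pow (X ^ s1 : F[X]) 1 s2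
      rwa [one_pow, ← pow_mul] at this
    · have := sub_dvd_pow_sub_pow (X ^ s2 : F[X]) 1 s1
      rwa [one_pow, ← pow_mul, mul_comm] at this
  · exact IsCoprime.mul_left hc1 hc2.of_mul_right_left
  · ext v
    rw [map_mul, Module.End.mul_apply]
    have h := aeval_comm (A - N) T2 U.mkQ hTq p2 v
    rw [ha2, LinearMap.zero_apply, Submodule.mkQ_apply, Submodule.Quotient.mk_eq_zero] at h
    have h' := aeval_comm T1 (A - N) U.subtype hTU p1 ⟨_, h⟩
    rw [ha1] at h'
    simpa using h'.symm
  · rw [sub_sub_cancel]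
    ext v
    rw [pow_two, Module.End.mul_apply, hNv (N v), hNv v]
    simp only [map_add, hπ', hqU, hσ1, hσ2, add_zero, zero_add, hN1', hN2', map_zero]
    simp

end
end PTS
open Polynomial Module

namespace PTS
section
variable {F : Type*} [Field F] [IsAlgClosed F] [CharZero F]

lemma pair_inv {V : Type*} [AddCommGroup V] [Module F V] (A : End F V) (u : V)
    (h2 : A (A u) = 0) : ∀ x ∈ Submodule.span F {u, A u}, A x ∈ Submodule.span F {u, A u} := by
  intro x hx
  obtain ⟨a, b, rfl⟩ := Submodule.mem_span_pair.1 hx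
  rw [map_add, map_smul, map_smul, h2, smul_zero, add_zero]
  exact Submodule.smul_mem _ _ (Submodule.subset_span (by simp))

lemma pair_notMem {V : Type*} [AddCommGroup V] [Module F V] (A : End F V) (u : V)
    (h2 : A (A u) = 0) (h1 : A u ≠ 0) : A u ∉ Submodule.span F {u} := by
  intro h
  obtain ⟨a, ha⟩ := Submodule.mem_span_singleton.1 h
  have : a • A u = 0 := by rw [← map_smul, ha, h2]
  rcases smul_eq_zero.1 this with h | h
  · apply h1; rw [← ha, h, zero_smul]
  · exact h1 h

lemma pair_finrank {V : Type*} [AddCommGroup V] [Module F V] (A : End F V) (u : V)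
    (h2 : A (A u) = 0) (h1 : A u ≠ 0) : finrank F (Submodule.span F {u, A u}) = 2 := by
  have hn := pair_notMem A u h2 h1
  have : LinearIndependent F ![u, A u] := by
    rw [LinearIndependent.pair_iff]
    intro s t hst
    have hs : s = 0 := by
      have := congrArg A hst
      rw [map_add, map_smul, map_smul, h2, smul_zero, add_zero, map_zero] at this
      exact (smul_eq_zero.1 this).resolve_right h1
    subst hs
    simp only [zero_smul, zero_add] at hst
    exact ⟨rfl, (smul_eq_zero.1 hst).resolve_right h1⟩
  have := finrank_span_eq_card this
  have hr : Set.range ![u, A u] = {u, A u} := by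
    simp only [Matrix.range_cons, Matrix.range_empty, Set.union_empty, Set.singleton_union]
  rw [hr] at this
  simpa using this

lemma pair_strong {V : Type*} [AddCommGroup V] [Module F V] (A : End F V) (u : V)
    (h2 : A (A u) = 0) (h1 : A u ≠ 0) : Strong (A.restrict (pair_inv A u h2)) := by
  obtain ⟨g, hg, hg1⟩ := LinearMap.exists_extend_of_notMem (V' := F) 0 (pair_notMem A u h2 h1) 1
  have hgu : g u = 0 := congrArg (fun f => f ⟨u, Submodule.mem_span_singleton_self u⟩) hg
  set U := Submodule.span F {u, A u} with hU
  have huU : u ∈ U := Submodule.subset_span (by simp)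
  refine cyc _ 0 ⟨u, huU⟩ (g ∘ₗ U.subtype) ?_ ?_ ?_ ?_
  · ext ⟨x, hx⟩
    obtain ⟨a, b, rfl⟩ := Submodule.mem_span_pair.1 hx
    simp [pow_two, h2]
  · intro i hi
    have : i = 0 := by omega
    subst this
    simp [hgu]
  · simp [hg1]
  · intro W hW
    rw [eq_top_iff]
    rintro ⟨x, hx⟩ -
    obtain ⟨a, b, rfl⟩ := Submodule.mem_span_pair.1 hx
    have e0 := W.smul_mem a (hW 0 (by omega))
    have e1 := W.smul_mem b (hW 1 (by omega))
    convert W.add_mem e0 e1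
    simp

lemma rank_mapQ {V : Type*} [AddCommGroup V] [Module F V] [FiniteDimensional F V] (A : End F V)
    (U : Submodule F V) (hU : ∀ x ∈ U, A x ∈ U) :
    finrank F (LinearMap.range A) ≤ finrank F (LinearMap.range (U.mapQ U A hU)) +
      finrank F (LinearMap.range A ⊓ U : Submodule F V) := by
  have h := LinearMap.finrank_range_add_finrank_ker (U.mkQ.domRestrict (LinearMap.range A))
  rw [← h]
  apply Nat.add_le_add
  · apply Submodule.finrank_mono
    rintro _ ⟨⟨_, ⟨x, rfl⟩⟩, rfl⟩
    exact ⟨U.mkQ x, by simp⟩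
  · rw [← LinearMap.finrank_range_of_inj (f := (LinearMap.range A).subtype ∘ₗ
      (LinearMap.ker (U.mkQ.domRestrict (LinearMap.range A))).subtype)]
    · apply Submodule.finrank_mono
      rintro _ ⟨⟨x, hx⟩, rfl⟩
      refine ⟨x.2, ?_⟩
      simpa using hx
    · exact Subtype.val_injective.comp Subtype.val_injective

lemma exists_pair {V : Type*} [AddCommGroup V] [Module F V] (A : End F V) (hA : A ≠ 0)
    (hn : IsNilpotent A) : ∃ x, A (A x) = 0 ∧ A x ≠ 0 := by
  by_contra! h
  obtain ⟨k, hk⟩ := hn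
  have : ∀ j, A ^ (j + 1) = 0 → A = 0 := by
    intro j
    induction j with
    | zero => simp
    | succ j ih =>
      intro hj
      apply ih
      ext v
      rw [pow_succ', Module.End.mul_apply]
      apply h
      rw [← Module.End.mul_apply, ← Module.End.mul_apply, ← pow_two, ← pow_add, add_comm 2 j, hj]
      rfl
  exact hA (this k (by rw [pow_succ, hk, zero_mul]))

lemma nil_strong (n : ℕ) : ∀ {V : Type*} [AddCommGroup V] [Module F V] [FiniteDimensional F V]
    (A : End F V) (_ : IsNilpotent A) (_ : finrank F V = n)
    (_ : n ≤ 2 * finrank F (LinearMap.range A)), Strong A := by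
  induction n using Nat.strong_induction_on with
  | _ n ih =>
  intro V _ _ _ A hnil hn hr
  have hdim := LinearMap.finrank_range_add_finrank_ker A
  rcases Nat.eq_zero_or_pos n with h0 | hpos
  · subst h0
    have : Subsingleton V := finrank_zero_iff.1 hn
    intro q hq
    exact ⟨0, 1, 1, le_rfl, one_dvd _, isCoprime_one_left, Subsingleton.elim _ _,
      Subsingleton.elim _ _⟩
  have hA0 : A ≠ 0 := by
    rintro rfl
    have h0 : LinearMap.range (0 : End F V) = ⊥ := LinearMap.range_zero
    rw [h0, finrank_bot] at hr
    omega
  -- splitting off a pair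
  have key : ∀ u, A (A u) = 0 → A u ≠ 0 → ∀ j,
      finrank F (LinearMap.range A ⊓ Submodule.span F {u, A u} : Submodule F V) ≤ j →
      n + 2 * j ≤ 2 * finrank F (LinearMap.range A) + 2 → Strong A := by
    intro u h2 h1 j hj hnj
    refine tri _ (pair_inv A u h2) (pair_strong A u h2 h1) ?_
    have hq := Submodule.finrank_quotient_add_finrank (Submodule.span F {u, A u})
    rw [pair_finrank A u h2 h1, hn] at hq
    refine ih (n - 2) (by omega) _ ?_ (by omega) ?_
    · obtain ⟨k, hk⟩ := hnil
      refine ⟨k, ?_⟩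
      rw [← Submodule.mapQ_pow]
      · ext x; simp [hk]
    · have := rank_mapQ A _ (pair_inv A u h2)
      omega
  obtain ⟨x, hx2, hx1⟩ := exists_pair A hA0 hnil
  by_cases hc : ∃ u, A (A u) = 0 ∧ u ∉ LinearMap.range A
  · obtain ⟨u, hu2, hu, hu1⟩ : ∃ u, A (A u) = 0 ∧ u ∉ LinearMap.range A ∧ A u ≠ 0 := by
      obtain ⟨u, hu2, hu⟩ := hc
      by_cases hu1 : A u = 0
      · by_cases hx : x ∈ LinearMap.range A
        · refine ⟨u + x, by simp [hu2, hx2], fun h => hu ?_, by simpa [hu1] using hx1⟩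
          simpa using Submodule.sub_mem _ h hx
        · exact ⟨x, hx2, hx, hx1⟩
      · exact ⟨u, hu2, hu, hu1⟩
    refine key u hu2 hu1 1 ?_ (by omega)
    refine le_trans (Submodule.finrank_mono (t := Submodule.span F {A u}) ?_)
      (finrank_span_singleton hu1).le
    rintro y ⟨hy1, hy2⟩
    obtain ⟨a, b, rfl⟩ := Submodule.mem_span_pair.1 hy2
    have ha : a = 0 := by
      by_contra ha
      apply hu
      have h3 : a • u ∈ LinearMap.range A := by
        have := Submodule.sub_mem _ hy1 (Submodule.smul_mem _ b (LinearMap.mem_range_self A u))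
        simpa using this
      exact (Submodule.smul_mem_iff _ ha).1 h3
    rw [ha, zero_smul, zero_add]
    exact Submodule.smul_mem _ _ (Submodule.mem_span_singleton_self _)
  · push Not at hc
    by_cases hbig : n + 2 ≤ 2 * finrank F (LinearMap.range A)
    · refine key x hx2 hx1 2 ?_ (by omega)
      rw [← pair_finrank A x hx2 hx1]
      exact Submodule.finrank_mono inf_le_right
    -- the remaining case is a single block of size three
    have hsq : finrank F (LinearMap.range (A ^ 2)) + finrank F (LinearMap.ker A)
        = finrank F (LinearMap.range A) := by
      have h := LinearMap.finrank_range_add_finrank_ker (A.domRestrict (LinearMap.range A))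
      have e1 : LinearMap.range (A ^ 2) = LinearMap.range (A.domRestrict (LinearMap.range A)) := by
        ext y
        constructor
        · rintro ⟨z, rfl⟩
          exact ⟨⟨A z, z, rfl⟩, by simp [pow_two]⟩
        · rintro ⟨⟨_, z, rfl⟩, rfl⟩
          exact ⟨z, by simp [pow_two]⟩
      have e2 : LinearMap.ker A = LinearMap.range ((LinearMap.range A).subtype ∘ₗ
          (LinearMap.ker (A.domRestrict (LinearMap.range A))).subtype) := by
        ext y
        constructor
        · intro hy
          have hy' : A y = 0 := hy
          exact ⟨⟨⟨y, hc y (by simp [hy'])⟩, hy'⟩, rfl⟩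
        · rintro ⟨⟨z, hz⟩, rfl⟩
          exact hz
      have e3 : finrank F (LinearMap.ker A)
          = finrank F (LinearMap.ker (A.domRestrict (LinearMap.range A))) := by
        rw [e2]
        exact LinearMap.finrank_range_of_inj
          (Subtype.val_injective.comp Subtype.val_injective)
      rw [← h, e1, e3]
    have hdim2 := LinearMap.finrank_range_add_finrank_ker (A ^ 2)
    have hle : finrank F (LinearMap.ker (A ^ 2)) ≤ finrank F (LinearMap.range A) := by
      apply Submodule.finrank_mono
      intro y hy
      exact hc y (by simpa [pow_two] using hy)
    have hker : 0 < finrank F (LinearMap.ker A) := by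
      rw [Module.finrank_pos_iff_exists_ne_zero]
      exact ⟨⟨A x, hx2⟩, fun h => hx1 (congrArg Subtype.val h)⟩
    have hn3 : n = 3 := by omega
    have hr1 : finrank F (LinearMap.range (A ^ 2)) = 1 := by omega
    have hA3 : A ^ 3 = 0 := by
      have h1 := (LinearMap.isNilpotent_iff_charpoly A).1 hnil
      have h2 := LinearMap.aeval_self_charpoly A
      rw [h1, hn, hn3] at h2
      simpa using h2
    obtain ⟨u, hu⟩ : ∃ u, (A ^ 2) u ≠ 0 := by
      by_contra! h
      have : A ^ 2 = 0 := by ext v; simp [h v]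
      rw [this] at hr1
      have h0 : LinearMap.range (0 : End F V) = ⊥ := LinearMap.range_zero
      rw [h0, finrank_bot] at hr1
      omega
    have hA3' : ∀ v, A (A (A v)) = 0 := fun v => by
      have := congrArg (fun f => f v) hA3
      simpa [pow_succ] using this
    have hu' : A (A u) ≠ 0 := by simpa [pow_two] using hu
    have hli : LinearIndependent F ![u, A u, A (A u)] := by
      rw [Fintype.linearIndependent_iff]
      intro g hg
      simp only [Fin.sum_univ_three, Matrix.cons_val] at hg
      have g0 : g 0 = 0 := by
        have := congrArg (fun v => A (A v)) hg
        simp only [map_add, map_smul, hA3', map_zero, smul_zero, add_zero] at this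
        exact (smul_eq_zero.1 this).resolve_right hu'
      have g1 : g 1 = 0 := by
        have := congrArg (fun v => A v) hg
        simp only [g0, zero_smul, zero_add, map_add, map_smul, hA3', map_zero, smul_zero, add_zero] at this
        exact (smul_eq_zero.1 this).resolve_right hu'
      have g2 : g 2 = 0 := by
        simp only [g0, g1, zero_smul, zero_add] at hg
        exact (smul_eq_zero.1 hg).resolve_right hu'
      intro i
      fin_cases i <;> assumption
    let b := basisOfLinearIndependentOfCardEqFinrank hli (by simp [hn, hn3])
    have hb : ∀ i, b i = ![u, A u, A (A u)] i := fun i => by simp [b]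
    have hb0 : b 0 = u := hb 0
    have hb1 : b 1 = A u := hb 1
    have hb2 : b 2 = A (A u) := hb 2
    refine cyc A 1 u (b.coord 2) hA3 ?_ ?_ ?_
    · intro i hi
      interval_cases i
      · simp [← hb0]
      · simp [← hb1]
    · simp [pow_two, ← hb2]
    · intro W hW
      rw [eq_top_iff, ← b.span_eq, Submodule.span_le]
      rintro _ ⟨i, rfl⟩
      have := hW i i.2
      fin_cases i
      · simpa [hb0] using this
      · simpa [hb1] using this
      · simpa [hb2, pow_two] using this

end
end PTS
open Polynomial Module

namespace PTS
section
variable {F : Type*} [Field F]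

lemma good_prod {V V1 V2 : Type*} [AddCommGroup V] [Module F V] [AddCommGroup V1] [Module F V1]
    [AddCommGroup V2] [Module F V2] (e : V ≃ₗ[F] V1 × V2) (A : End F V) (A1 : End F V1)
    (A2 : End F V2) (h : ∀ v, e (A v) = (A1 (e v).1, A2 (e v).2)) (h1 : Good A1) (h2 : Good A2) :
    Good A := by
  obtain ⟨T1, ⟨s1, hs1, ht1⟩, hn1⟩ := h1
  obtain ⟨T2, ⟨s2, hs2, ht2⟩, hn2⟩ := h2
  set T : End F V := e.symm.toLinearMap ∘ₗ (T1.prodMap T2) ∘ₗ e.toLinearMap with hT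
  have hTv : ∀ v, e (T v) = (T1 (e v).1, T2 (e v).2) := fun v => by simp [hT]
  have hTs : ∀ s v, e ((T ^ s) v) = ((T1 ^ s) (e v).1, (T2 ^ s) (e v).2) := by
    intro s
    induction s with
    | zero => simp
    | succ s ih => intro v; simp only [pow_succ, Module.End.mul_apply, ih, hTv]
  refine ⟨T, ⟨s1 * s2, Nat.mul_pos hs1 hs2, ?_⟩, ?_⟩
  · ext v
    apply e.injective
    rw [hTs, pow_mul, ht1, one_pow, mul_comm, pow_mul, ht2, one_pow]
    rfl
  · have hv : ∀ v, e ((A - T) v) = ((A1 - T1) (e v).1, (A2 - T2) (e v).2) := fun v => by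
      simp [h, hTv]
    ext v
    apply e.injective
    rw [pow_two, Module.End.mul_apply, hv, hv]
    simp only
    rw [← Module.End.mul_apply, ← Module.End.mul_apply, ← pow_two, ← pow_two, hn1, hn2]
    simp

/-- the two-dimensional building block `diag(λ, 0)` -/
def diagA (l : F) : End F (F × F) := (l • LinearMap.fst F F F).prod 0

/-- its torsion part -/
def diagT (l : F) : End F (F × F) :=
  (-l • LinearMap.snd F F F).prod (l • LinearMap.fst F F F + l • LinearMap.snd F F F)

lemma diag_good (l : F) (j : ℕ) (hj : 1 ≤ j) (hl : l ^ j = 1) : Good (diagA l) := by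
  have h3 : ∀ v, (diagT l ^ 3) v = (-l ^ 3) • v := by
    rintro ⟨a, b⟩
    simp only [pow_succ, pow_zero, one_mul, Module.End.mul_apply, diagT, LinearMap.prod_apply,
      Function.prod_apply, LinearMap.smul_apply, LinearMap.add_apply, LinearMap.fst_apply,
      LinearMap.snd_apply, smul_eq_mul, Prod.smul_mk, Prod.mk.injEq]
    constructor <;> ring
  have h3' : diagT l ^ 3 = algebraMap F _ (-l ^ 3) := by
    apply LinearMap.ext
    intro v
    rw [h3, Module.algebraMap_end_apply]
  refine ⟨diagT l, ⟨3 * (2 * j), by omega, ?_⟩, ?_⟩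
  · rw [pow_mul, h3', ← map_pow, pow_mul, neg_sq, ← pow_mul, ← pow_mul,
      show 3 * (2 * j) = j * 6 by ring, pow_mul, hl, one_pow, map_one]
  · apply LinearMap.ext
    rintro ⟨a, b⟩
    simp only [pow_succ, pow_zero, one_mul, Module.End.mul_apply, diagT, diagA,
      LinearMap.prod_apply, LinearMap.sub_apply,
      Function.prod_apply, LinearMap.smul_apply, LinearMap.add_apply, LinearMap.fst_apply,
      LinearMap.snd_apply, smul_eq_mul, LinearMap.zero_apply]
    ext <;> simp <;> ring

lemma restrict_pow {V : Type*} [AddCommGroup V] [Module F V] (A : End F V) (W : Submodule F V)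
    (hW : ∀ x ∈ W, A x ∈ W) (j : ℕ) (w : W) : (((A.restrict hW) ^ j) w : V) = (A ^ j) (w : V) := by
  induction j generalizing w with
  | zero => rfl
  | succ j ih => rw [pow_succ, pow_succ, Module.End.mul_apply, Module.End.mul_apply, ih]; rfl

lemma notMem_range [CharZero F] {V : Type*} [AddCommGroup V] [Module F V] (A : End F V) (j : ℕ)
    (hj : 1 ≤ j) (hA : A ^ j * A ^ j = A ^ j) (l : F) (hl : l ^ j = 1) (d : V) (hd : d ≠ 0)
    (hAd : A d = l • d) : ∀ x, A x - l • x ≠ d := by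
  intro x hx
  have hx' : A x = l • x + d := by rw [← hx]; abel
  have hl0 : l ≠ 0 := by
    rintro rfl
    rw [zero_pow (by omega)] at hl
    exact zero_ne_one hl
  have hp : ∀ i : ℕ, l • (A ^ i) x = (l ^ (i + 1)) • x + ((i : F) * l ^ i) • d := by
    intro i
    induction i with
    | zero => simp
    | succ i ih =>
      rw [pow_succ', Module.End.mul_apply, ← map_smul, ih, map_add, map_smul, map_smul, hx', hAd]
      push_cast
      module
  have h1 := hp j
  have h2 := hp (j + j)
  rw [pow_add, hA, h1] at h2
  rw [pow_succ, pow_succ, pow_add, hl] at h2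
  push_cast at h2
  have : (j : F) • d = 0 := by
    have h3 := sub_eq_zero.2 h2.symm
    rw [← h3]
    module
  rcases smul_eq_zero.1 this with h | h
  · have : j = 0 := by exact_mod_cast h
    omega
  · exact hd h

lemma main [IsAlgClosed F] [CharZero F] (j : ℕ) (hj : 1 ≤ j) (n : ℕ) :
    ∀ {V : Type*} [AddCommGroup V] [Module F V] [FiniteDimensional F V]
    (A : End F V) (_ : A ^ j * A ^ j = A ^ j) (_ : finrank F V = n)
    (_ : n ≤ 2 * finrank F (LinearMap.range A)), Good A := by
  induction n using Nat.strong_induction_on with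
  | _ n ih =>
  intro V _ _ _ A hA hn hr
  have hdim := LinearMap.finrank_range_add_finrank_ker A
  by_cases hE : A ^ j = 0
  · exact (nil_strong n A ⟨j, hE⟩ hn hr).good
  have hAv : ∀ v, (A ^ j) ((A ^ j) v) = (A ^ j) v := fun v => by
    rw [← Module.End.mul_apply, hA]
  have hcomm : ∀ v, (A ^ j) (A v) = A ((A ^ j) v) := fun v => by
    rw [← Module.End.mul_apply, ← Module.End.mul_apply, ← pow_succ, ← pow_succ']
  have hR : ∀ x ∈ LinearMap.range (A ^ j), A x ∈ LinearMap.range (A ^ j) := by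
    rintro _ ⟨x, rfl⟩
    exact ⟨A x, hcomm x⟩
  have hK : ∀ x ∈ LinearMap.ker (A ^ j), A x ∈ LinearMap.ker (A ^ j) := by
    intro x hx
    rw [LinearMap.mem_ker] at *
    rw [hcomm, hx, map_zero]
  by_cases hz : ∃ z, A z = 0 ∧ z ∉ LinearMap.range A
  · obtain ⟨z, hz, hzr⟩ := hz
    -- an eigenvector with nonzero eigenvalue
    obtain ⟨l, d, hl, hd, hAd⟩ : ∃ (l : F) (d : V), l ^ j = 1 ∧ d ≠ 0 ∧ A d = l • d := by
      have : Nontrivial (LinearMap.range (A ^ j)) := by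
        rw [Submodule.nontrivial_iff_ne_bot]
        intro h
        exact hE (LinearMap.range_eq_bot.1 h)
      obtain ⟨l, hl⟩ := Module.End.exists_eigenvalue (A.restrict hR)
      obtain ⟨d, hd⟩ := hl.exists_hasEigenvector
      have hd0 : (d : V) ≠ 0 := fun h => hd.2 (Subtype.ext h)
      have h1 := hd.pow_apply j
      have h2 := congrArg Subtype.val h1
      rw [restrict_pow] at h2
      obtain ⟨y, hy⟩ := d.2
      refine ⟨l, d, ?_, hd0, congrArg Subtype.val hd.apply_eq_smul⟩
      rw [← hy, hAv, hy] at h2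
      have h3 : (l ^ j - 1) • (d : V) = 0 := by
        rw [sub_smul, one_smul, sub_eq_zero]
        exact h2.symm
      exact sub_eq_zero.1 ((smul_eq_zero.1 h3).resolve_right hd0)
    have hl0 : l ≠ 0 := by
      rintro rfl
      rw [zero_pow (by omega)] at hl
      exact zero_ne_one hl
    obtain ⟨φ, hφ, hφz⟩ := LinearMap.exists_extend_of_notMem (V' := F) 0 hzr 1
    have hφA : ∀ v, φ (A v) = 0 := fun v => congrArg (fun f => f ⟨A v, v, rfl⟩) hφ
    have hdr : d ∉ LinearMap.range (A - l • (1 : End F V)) := by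
      rintro ⟨x, hx⟩
      exact notMem_range A j hj hA l hl d hd hAd x hx
    obtain ⟨ψ, hψ, hψd⟩ := LinearMap.exists_extend_of_notMem (V' := F) 0 hdr 1
    have hψA : ∀ v, ψ (A v) = l * ψ v := fun v => by
      have : ψ (A v - l • v) = 0 := congrArg (fun f => f ⟨A v - l • v, v, rfl⟩) hψ
      rw [map_sub, map_smul, smul_eq_mul, sub_eq_zero] at this
      exact this
    have hφd : φ d = 0 := by
      have := hφA d
      rw [hAd, map_smul, smul_eq_mul] at this
      exact (mul_eq_zero.1 this).resolve_left hl0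
    have hψz : ψ z = 0 := by
      have := hψA z
      rw [hz, map_zero] at this
      exact (mul_eq_zero.1 this.symm).resolve_left hl0
    set W := LinearMap.ker φ ⊓ LinearMap.ker ψ with hWdef
    have hWmem : ∀ x, x ∈ W ↔ φ x = 0 ∧ ψ x = 0 := fun x => by
      rw [hWdef, Submodule.mem_inf, LinearMap.mem_ker, LinearMap.mem_ker]
    have hW : ∀ x ∈ W, A x ∈ W := fun x hx => by
      rw [hWmem] at *
      exact ⟨hφA x, by rw [hψA, hx.2, mul_zero]⟩
    let P : V →ₗ[F] W := LinearMap.codRestrict W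
      (LinearMap.id - ψ.smulRight d - φ.smulRight z) (fun v => by
        rw [hWmem]; simp [hφd, hψd, hφz, hψz])
    have hP : ∀ v, (P v : V) = v - ψ v • d - φ v • z := fun v => rfl
    let f : V →ₗ[F] (F × F) × W := (ψ.prod φ).prod P
    let g : (F × F) × W →ₗ[F] V :=
      (((LinearMap.fst F F F).smulRight d + (LinearMap.snd F F F).smulRight z)).coprod W.subtype
    have hg : ∀ a b w, g ((a, b), w) = a • d + b • z + w := fun a b w => rfl
    have hf : ∀ v, f v = ((ψ v, φ v), P v) := fun v => rfl
    have hgf : ∀ v, g (f v) = v := fun v => by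
      rw [hf, hg, hP]; abel
    have hfg : ∀ y, f (g y) = y := by
      rintro ⟨⟨a, b⟩, ⟨w, hw⟩⟩
      have hw' := (hWmem w).1 hw
      have e1 : ψ (g ((a, b), ⟨w, hw⟩)) = a := by simp [hg, hψd, hψz, hw'.2]
      have e2 : φ (g ((a, b), ⟨w, hw⟩)) = b := by simp [hg, hφd, hφz, hw'.1]
      rw [hf, e1, e2]
      congr 1
      apply Subtype.ext
      rw [hP, e1, e2, hg]
      simp only
      abel
    let e : V ≃ₗ[F] (F × F) × W :=
      LinearEquiv.ofLinearMap f g (LinearMap.ext hfg) (LinearMap.ext hgf)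
    have he : ∀ v, e v = ((ψ v, φ v), P v) := fun v => rfl
    have hWn : finrank F W + 2 = n := by
      have := e.finrank_eq
      rw [hn, finrank_prod, finrank_prod, finrank_self] at this
      omega
    have hWk : finrank F (LinearMap.ker (A.restrict hW)) < finrank F (LinearMap.ker A) := by
      rw [← LinearMap.finrank_range_of_inj (f := W.subtype ∘ₗ
        (LinearMap.ker (A.restrict hW)).subtype)
          (Subtype.val_injective.comp Subtype.val_injective)]
      apply Submodule.finrank_lt_finrank_of_lt
      refine lt_of_le_of_ne ?_ ?_
      · rintro _ ⟨⟨x, hx⟩, rfl⟩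
        exact congrArg Subtype.val hx
      · intro h
        have : z ∈ LinearMap.ker A := hz
        rw [← h] at this
        obtain ⟨⟨⟨x, hx1⟩, hx⟩, hxz⟩ := this
        have hxz' : x = z := hxz
        rw [hxz'] at hx1
        have := ((hWmem z).1 hx1).1
        rw [hφz] at this
        exact one_ne_zero this
    have hdimW := LinearMap.finrank_range_add_finrank_ker (A.restrict hW)
    refine good_prod e A (diagA l) (A.restrict hW) ?_ (diag_good l j hj hl) ?_
    · intro v
      rw [he, he, hψA, hφA]
      refine Prod.ext (Prod.ext ?_ ?_) ?_
      · simp [diagA]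
      · simp [diagA]
      · apply Subtype.ext
        rw [LinearMap.coe_restrict_apply, hP, hP, hψA, hφA, map_sub, map_sub, map_smul, map_smul,
          hAd, hz]
        module
    · refine ih (finrank F W) (by omega) _ ?_ rfl (by omega)
      apply LinearMap.ext
      intro w
      apply Subtype.ext
      rw [Module.End.mul_apply, restrict_pow, restrict_pow, hAv]
  · push Not at hz
    have hidem : IsIdempotentElem (A ^ j) := hA
    have hc := LinearMap.IsIdempotentElem.isCompl hidem
    let e := (Submodule.prodEquivOfIsCompl _ _ hc).symm
    refine good_prod e A (A.restrict hR) (A.restrict hK) ?_ ?_ ?_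
    · intro v
      obtain ⟨⟨a, b⟩, rfl⟩ := e.symm.surjective v
      rw [e.apply_symm_apply]
      apply e.symm.injective
      rw [e.symm_apply_apply]
      simp [e]
    · refine ⟨A.restrict hR, ⟨j, hj, ?_⟩, by simp⟩
      apply LinearMap.ext
      rintro ⟨_, x, rfl⟩
      apply Subtype.ext
      rw [restrict_pow]
      exact hAv x
    · have hle : finrank F (LinearMap.ker (A.restrict hK)) ≤
          finrank F (LinearMap.range (A.restrict hK)) := by
        apply Submodule.finrank_mono
        rintro ⟨x, hxK⟩ hx
        have hx' : A x = 0 := congrArg Subtype.val hx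
        obtain ⟨y, hy⟩ := hz x hx'
        have hxE : (A ^ j) x = 0 := hxK
        refine ⟨⟨y - (A ^ j) y, ?_⟩, ?_⟩
        · rw [LinearMap.mem_ker, map_sub, hAv, sub_self]
        · apply Subtype.ext
          rw [LinearMap.coe_restrict_apply]
          simp only
          rw [map_sub, ← hcomm, hy, hxE, sub_zero]
      have hdimK := LinearMap.finrank_range_add_finrank_ker (A.restrict hK)
      refine (nil_strong _ (A.restrict hK) ⟨j, ?_⟩ rfl (by omega)).good
      apply LinearMap.ext
      rintro ⟨x, hx⟩
      apply Subtype.ext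
      rw [restrict_pow]
      exact hx

end
end PTS

/-- Over an algebraically closed field of characteristic zero, every periodic
matrix of rank at least `n/2` is the sum of a torsion matrix and a
square-zero matrix. -/
theorem periodic_eq_torsion_add_squareZero_algClosed
    {F : Type*} [Field F] [IsAlgClosed F] [CharZero F] {n : ℕ}
    (A : Matrix (Fin n) (Fin n) F)
    (hA : ∃ m k : ℕ, 1 ≤ k ∧ k < m ∧ A ^ m = A ^ k)
    (hrank : n ≤ 2 * A.rank) :
    ∃ T N : Matrix (Fin n) (Fin n) F,
      IsUnit T ∧ (∃ s : ℕ, 1 ≤ s ∧ T ^ s = 1) ∧ N ^ 2 = 0 ∧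
      A = T + N := by
  obtain ⟨m, k, hk, hkm, hmk⟩ := hA
  obtain ⟨p, hp, rfl⟩ : ∃ p, 1 ≤ p ∧ m = k + p := ⟨m - k, by omega, by omega⟩
  have h1 : ∀ i, k ≤ i → A ^ (i + p) = A ^ i := by
    intro i hi
    obtain ⟨r, rfl⟩ := Nat.exists_eq_add_of_le hi
    rw [show k + r + p = (k + p) + r by ring, pow_add, hmk, ← pow_add]
  have h2 : ∀ t i, k ≤ i → A ^ (i + p * t) = A ^ i := by
    intro t
    induction t with
    | zero => simp
    | succ t ih =>
      intro i hi
      rw [show i + p * (t + 1) = (i + p * t) + p by ring, h1 _ (by omega), ih i hi]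
  have hidem : A ^ (p * k) * A ^ (p * k) = A ^ (p * k) := by
    rw [← pow_add]
    exact h2 k _ (Nat.le_mul_of_pos_left k hp)
  let Φ := Matrix.toLinAlgEquiv' (R := F) (n := Fin n)
  obtain ⟨T, ⟨s, hs, hT⟩, hN⟩ := PTS.main (p * k) (Nat.mul_pos hp hk) n (Φ A)
    (by rw [← map_pow, ← map_mul, hidem]) (by simp) hrank
  have hT' : (Φ.symm T) ^ s = 1 := by rw [← map_pow, hT, map_one]
  refine ⟨Φ.symm T, A - Φ.symm T, IsUnit.of_pow_eq_one hT' (by omega), ⟨s, hs, hT'⟩, ?_, by abel⟩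
  apply Φ.injective
  rw [map_pow, map_sub, Φ.apply_symm_apply, hN, map_zero]
end

section
/- Over a field of prime characteristic p, every periodic matrix A ∈ M_n(F) with rank(A) ≥ n/2 is the sum of a torsion matrix and a square-zero matrix. -/
open Module Polynomial

theorem exists_avoid {K V : Type*} [Field K] [AddCommGroup V] [Module K V] [FiniteDimensional K V]
    (d : ℕ) : ∀ P Q : Submodule K V, finrank K P + d ≤ finrank K V → finrank K Q + d ≤ finrank K V →
    ∃ U : Submodule K V, finrank K U = d ∧ Disjoint U P ∧ Disjoint U Q := by
  induction d with
  | zero => intro P Q _ _; exact ⟨⊥, by simp, disjoint_bot_left, disjoint_bot_left⟩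
  | succ d ih =>
    intro P Q hP hQ
    have hv : ∃ v, v ∉ P ∧ v ∉ Q := by
      by_contra! h
      have hP' : P ≠ ⊤ := by rintro rfl; simp at hP
      have hQ' : Q ≠ ⊤ := by rintro rfl; simp at hQ
      obtain ⟨a, -, ha⟩ := SetLike.exists_of_lt (lt_top_iff_ne_top.2 hP')
      obtain ⟨b, -, hb⟩ := SetLike.exists_of_lt (lt_top_iff_ne_top.2 hQ')
      have haQ := h a ha
      have hbP : b ∈ P := by by_contra hc; exact hb (h b hc)
      have h1 : a + b ∉ P := fun hc => ha ((Submodule.add_mem_iff_left P hbP).1 hc)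
      have h2 : a + b ∉ Q := fun hc => hb ((Submodule.add_mem_iff_right Q haQ).1 hc)
      exact h2 (h _ h1)
    obtain ⟨v, hvP, hvQ⟩ := hv
    have hv0 : v ≠ 0 := by rintro rfl; simp at hvP
    have hs : finrank K (K ∙ v) ≤ 1 := (finrank_span_singleton hv0).le
    have key : ∀ P : Submodule K V, finrank K P + (d + 1) ≤ finrank K V →
        finrank K (P ⊔ K ∙ v : Submodule K V) + d ≤ finrank K V := by
      intro P hP
      have := Submodule.finrank_add_le_finrank_add_finrank P (K ∙ v)
      omega
    obtain ⟨U, hU, hUP, hUQ⟩ := ih (P ⊔ K ∙ v) (Q ⊔ K ∙ v) (key P hP) (key Q hQ)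
    have dis : ∀ P : Submodule K V, v ∉ P → Disjoint (K ∙ v) P := fun P hP =>
      ((Submodule.disjoint_span_singleton' hv0).2 hP).symm
    refine ⟨U ⊔ K ∙ v, ?_, ?_, ?_⟩
    · have h1 : Disjoint U (K ∙ v) := hUP.mono_right le_sup_right
      have h2 := Submodule.finrank_sup_add_finrank_inf_eq U (K ∙ v)
      rw [h1.eq_bot, finrank_bot, finrank_span_singleton hv0] at h2
      omega
    · exact Disjoint.disjoint_sup_left_of_disjoint_sup_right (dis P hvP) (by rwa [sup_comm])
    · exact Disjoint.disjoint_sup_left_of_disjoint_sup_right (dis Q hvQ) (by rwa [sup_comm])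

theorem end_unit_add_sqz {K V : Type*} [Field K] [AddCommGroup V] [Module K V]
    [FiniteDimensional K V] (f : Module.End K V)
    (h : finrank K V ≤ 2 * finrank K (LinearMap.range f)) :
    ∃ N : Module.End K V, N ^ 2 = 0 ∧ IsUnit (f + N) := by
  have hrn := LinearMap.finrank_range_add_finrank_ker f
  obtain ⟨U, hU, hUW, hUR⟩ := exists_avoid (finrank K (LinearMap.ker f)) (LinearMap.ker f)
    (LinearMap.range f) (by omega) (by omega)
  obtain ⟨H, hUH, hH⟩ := hUW.exists_isCompl
  let e : LinearMap.ker f ≃ₗ[K] U := LinearEquiv.ofFinrankEq _ _ hU.symm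
  let N : Module.End K V :=
    U.subtype ∘ₗ e.toLinearMap ∘ₗ (LinearMap.ker f).projectionOnto H hH.symm
  have hNU : ∀ x, N x ∈ U := fun x => by simp [N]
  have hN0 : ∀ x ∈ H, N x = 0 := fun x hx => by
    have : (LinearMap.ker f).projectionOnto H hH.symm x = 0 := by simpa using hx
    simp [N, this]
  have hNW : ∀ x ∈ LinearMap.ker f, N x = 0 → x = 0 := fun x hx h0 => by
    have h1 := Submodule.projectionOnto_apply_left hH.symm ⟨x, hx⟩
    simp only [N, LinearMap.comp_apply] at h0
    rw [h1] at h0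
    simpa using h0
  refine ⟨N, ?_, ?_⟩
  · ext x; simp [pow_two, hN0 _ (hUH (hNU x))]
  · rw [LinearMap.isUnit_iff_ker_eq_bot, LinearMap.ker_eq_bot']
    intro x hx
    have h1 : f x = N (-x) := by
      rw [map_neg]; exact eq_neg_of_add_eq_zero_left hx
    have h2 : f x = 0 := by
      have := hUR.le_bot ⟨h1 ▸ hNU (-x), LinearMap.mem_range_self f x⟩
      simpa using this
    refine hNW x h2 ?_
    simpa [h2] using hx

theorem torsion_of_isUnit {k K ι : Type*} [Field k] [Finite k] [Field K] [Algebra k K]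
    [Algebra.IsIntegral k K] [Fintype ι] [DecidableEq ι] (T : Matrix ι ι K) (hT : IsUnit T) :
    ∃ s : ℕ, 1 ≤ s ∧ T ^ s = 1 := by
  have h1 : IsIntegral k T := isIntegral_trans (A := K) T (Matrix.isIntegral T)
  have h2 := h1.fg_adjoin_singleton
  have : Module.Finite k (Algebra.adjoin k {T}) := Module.Finite.of_fg h2
  have : Finite (Algebra.adjoin k {T}) := Module.finite_of_finite k
  obtain ⟨a, b, hab, he⟩ := Finite.exists_ne_map_eq_of_infinite
    (fun n : ℕ => (⟨T, Algebra.self_mem_adjoin_singleton k T⟩ : Algebra.adjoin k {T}) ^ n)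
  have he' : T ^ a = T ^ b := by simpa using congrArg Subtype.val he
  clear he
  wlog hlt : a < b generalizing a b
  · exact this b a hab.symm he'.symm (by omega)
  refine ⟨b - a, by omega, ?_⟩
  have h3 : T ^ a * T ^ (b - a) = T ^ a * 1 := by
    rw [← pow_add, mul_one, he']; congr 1; omega
  exact (hT.pow a).mul_left_cancel h3

theorem matrix_rank_map_le {K F ι : Type*} [Field K] [Field F] [Algebra K F] [Fintype ι] [DecidableEq ι]
    (A : Matrix ι ι K) : (A.map (algebraMap K F)).rank ≤ A.rank := by
  let S := LinearMap.range A.mulVecLin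
  let b := Module.finBasis K S
  have hc : ∀ j, ∃ x : S, (x : ι → K) = A.col j := fun j =>
    ⟨⟨_, LinearMap.mem_range_self A.mulVecLin (Pi.single j 1)⟩, by simp⟩
  choose x hx using hc
  let B : Matrix ι (Fin (finrank K S)) K := Matrix.of fun i l => (b l : ι → K) i
  let C : Matrix (Fin (finrank K S)) ι K := Matrix.of fun l j => b.repr (x j) l
  have hA : A = B * C := by
    ext i j
    have h : ((∑ l, b.repr (x j) l • b l : S) : ι → K) i = A i j := by
      rw [b.sum_repr, hx]; rfl
    rw [← h]
    simp [Matrix.mul_apply, B, C, mul_comm, -Basis.sum_repr]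
  have : (A.map (algebraMap K F)) = B.map (algebraMap K F) * C.map (algebraMap K F) := by
    rw [← Matrix.map_mul, ← hA]
  rw [this]
  refine (Matrix.rank_mul_le_left _ _).trans ((Matrix.rank_le_card_width _).trans ?_)
  simp [Matrix.rank, S]

theorem matrix_unit_add_sqz {K ι : Type*} [Field K] [Fintype ι] [DecidableEq ι]
    (A : Matrix ι ι K) (h : Fintype.card ι ≤ 2 * A.rank) :
    ∃ N : Matrix ι ι K, N ^ 2 = 0 ∧ IsUnit (A + N) := by
  obtain ⟨N, hN, hu⟩ := end_unit_add_sqz (Matrix.toLinAlgEquiv' A) (by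
    rw [Module.finrank_fintype_fun_eq_card]; exact h)
  refine ⟨Matrix.toLinAlgEquiv'.symm N, by rw [← map_pow, hN, map_zero], ?_⟩
  have := hu.map (Matrix.toLinAlgEquiv' (R := K) (n := ι)).symm
  simpa using this

theorem exists_equiv_pi.{u, v} {F : Type u} {V : Type v} [Field F] [AddCommGroup V] [Module F V]
    [FiniteDimensional F V] (φ : Module.End F V) :
    ∃ (η : Type u) (_ : Fintype η) (g : η → F[X]) (_ : ∀ i, g i ≠ 0)
      (E : V ≃ₗ[F] ∀ i, AdjoinRoot (g i)), ∀ v i, E (φ v) i = AdjoinRoot.root (g i) * E v i := by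
  have htor : Module.IsTorsion F[X] (AEval' φ) := by
    intro x
    refine ⟨⟨minpoly F φ, mem_nonZeroDivisors_of_ne_zero
      (minpoly.ne_zero (Algebra.IsIntegral.isIntegral φ))⟩, ?_⟩
    obtain ⟨y, rfl⟩ := (AEval'.of φ).surjective x
    change minpoly F φ • AEval.of F V φ y = 0
    rw [← AEval.of_aeval_smul, minpoly.aeval, zero_smul, map_zero]
  obtain ⟨η, hη, q, hq, e, ⟨h⟩⟩ := Module.equiv_directSum_of_isTorsion htor
  let E : V ≃ₗ[F] ∀ i, AdjoinRoot (q i ^ e i) :=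
    (AEval'.of φ).trans ((h.restrictScalars F).trans
      (DirectSum.linearEquivFunOnFintype F η (fun i => AdjoinRoot (q i ^ e i))))
  refine ⟨η, hη, fun i => q i ^ e i, fun i => pow_ne_zero _ (hq i).ne_zero, E, ?_⟩
  intro v i
  have h1 : h (AEval'.of φ (φ v)) = (X : F[X]) • h (AEval'.of φ v) := by
    rw [← AEval'.X_smul_of, map_smul]
  have h2 : ∀ y : F[X] ⧸ F[X] ∙ (q i ^ e i), (X : F[X]) • y =
      (AdjoinRoot.root (q i ^ e i) * (show AdjoinRoot (q i ^ e i) from y) :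
        AdjoinRoot (q i ^ e i)) := by
    intro y
    obtain ⟨z, rfl⟩ := Submodule.Quotient.mk_surjective _ y
    exact (map_mul (AdjoinRoot.mk (q i ^ e i)) X z)
  refine Eq.trans ?_ (h2 (h (AEval'.of φ v) i))
  change (h (AEval'.of φ (φ v))) i = ((X : F[X]) • h (AEval'.of φ v)) i
  rw [h1]

theorem exists_good_basis.{w, u, v} {k : Type w} {F : Type u} {V : Type v} [Field k] [Field F] [Algebra k F] [AddCommGroup V]
    [Module F V] [FiniteDimensional F V] (φ : Module.End F V) (f : k[X]) (hf : f.Monic)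
    (hφ : aeval φ (f.map (algebraMap k F)) = 0) :
    ∃ (ι : Type u) (_ : Fintype ι) (_ : DecidableEq ι) (b : Basis ι F V),
      ∀ i j, IsIntegral k (LinearMap.toMatrix b b φ i j) := by
  classical
  obtain ⟨η, hη, g, hg, E, hE⟩ := exists_equiv_pi φ
  let pb := fun i => AdjoinRoot.powerBasis (hg i)
  let b : Basis (Σ i, Fin (pb i).dim) F V := (Pi.basis fun i => (pb i).basis).map E.symm
  refine ⟨_, inferInstance, inferInstance, b, ?_⟩
  have hpoly : ∀ (r : F[X]) v i, E (aeval φ r v) i = aeval (AdjoinRoot.root (g i)) r * E v i := by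
    intro r
    induction r using Polynomial.induction_on' with
    | add p q hp hq => intro v i; simp [hp, hq, add_mul]
    | monomial n a =>
      intro v i
      have : ∀ n, E ((φ ^ n) v) i = AdjoinRoot.root (g i) ^ n * E v i := by
        intro n
        induction n with
        | zero => simp
        | succ n ih => rw [pow_succ', Module.End.mul_apply, hE, ih, pow_succ', mul_assoc]
      simp [aeval_monomial, this, Algebra.smul_def, mul_assoc]
  have hroot : ∀ i, aeval (AdjoinRoot.root (g i)) (f.map (algebraMap k F)) = 0 := by
    intro i
    have h1 := hpoly (f.map (algebraMap k F)) (E.symm (fun _ => 1)) i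
    rw [hφ] at h1
    simpa using h1.symm
  have hcoeff : ∀ i l, IsIntegral k ((pb i).minpolyGen.coeff l) := by
    intro i l
    rw [PowerBasis.minpolyGen_eq]
    have hm := integralClosure.mem_lifts_of_monic_of_dvd_map F hf
      (minpoly.monic (pb i).isIntegral_gen)
      (minpoly.dvd F (pb i).gen (by simpa only [pb, AdjoinRoot.powerBasis_gen] using hroot i))
    obtain ⟨c, hc⟩ := (lifts_iff_coeff_lifts _).1 hm l
    rw [← hc]
    exact c.2
  rintro ⟨i, s⟩ ⟨j, t⟩
  have hent : LinearMap.toMatrix b b φ ⟨i, s⟩ ⟨j, t⟩ =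
      if h : j = i then Algebra.leftMulMatrix (pb i).basis (pb i).gen s (h ▸ t) else 0 := by
    have hb : E (b ⟨j, t⟩) = Pi.single j ((pb j).basis t) := by
      simp [b]
    rw [LinearMap.toMatrix_apply]
    have : b.repr (φ (b ⟨j, t⟩)) ⟨i, s⟩ = (pb i).basis.repr (E (φ (b ⟨j, t⟩)) i) s := by
      simp only [b, Basis.map_repr, LinearEquiv.trans_apply, LinearEquiv.symm_symm, Pi.basis_repr]
    rw [this, hE, hb]
    split_ifs with h
    · subst h
      rw [Algebra.leftMulMatrix_eq_repr_mul]
      simp [pb]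
    · rw [Pi.single_eq_of_ne (Ne.symm h)]
      simp
  rw [hent]
  split_ifs with h
  · subst h
    rw [PowerBasis.leftMulMatrix]
    simp only [Matrix.of_apply]
    split_ifs
    · exact (hcoeff _ _).neg
    · exact isIntegral_one
    · exact isIntegral_zero
  · exact isIntegral_zero

/-- Over a field of prime characteristic, every periodic matrix of rank at
least `n/2` is the sum of a torsion matrix and a square-zero matrix. -/
theorem periodic_eq_torsion_add_squareZero_charP
    {F : Type*} [Field F] {p : ℕ} [hp : Fact p.Prime] [CharP F p] {n : ℕ}
    (A : Matrix (Fin n) (Fin n) F)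
    (hA : ∃ m k : ℕ, 1 ≤ k ∧ k < m ∧ A ^ m = A ^ k)
    (hrank : n ≤ 2 * A.rank) :
    ∃ T N : Matrix (Fin n) (Fin n) F,
      IsUnit T ∧ (∃ s : ℕ, 1 ≤ s ∧ T ^ s = 1) ∧ N ^ 2 = 0 ∧
      A = T + N := by
  obtain ⟨m, k, hk, hkm, hA⟩ := hA
  let _ : Algebra (ZMod p) F := ZMod.algebra F p
  let L := Matrix.toLinAlgEquiv (Pi.basisFun F (Fin n))
  obtain ⟨ι, _, _, b, hb⟩ := exists_good_basis (k := ZMod p) (L A) (X ^ m - X ^ k)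
    (monic_X_pow_sub (by simpa using hkm)) (by
      rw [Polynomial.map_sub, Polynomial.map_pow, Polynomial.map_pow, map_X, map_sub, map_pow,
        map_pow, aeval_X, ← map_pow, ← map_pow, hA, sub_self])
  let K := algebraicClosure (ZMod p) F
  let A0 : Matrix ι ι K := Matrix.of fun i j =>
    ⟨LinearMap.toMatrix b b (L A) i j, mem_algebraicClosure_iff'.2 (hb i j)⟩
  have hA0 : A0.map (algebraMap K F) = LinearMap.toMatrix b b (L A) := by
    ext i j; rfl
  have hcard : Fintype.card ι = n := by
    rw [← Module.finrank_eq_card_basis b]; simp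
  have hr : n ≤ 2 * A0.rank := by
    have h1 := matrix_rank_map_le (F := F) A0
    rw [hA0] at h1
    have h2 : (LinearMap.toMatrix b b (L A)).rank = A.rank := by
      rw [Matrix.rank_eq_finrank_range_toLin _ b b, Matrix.toLin_toMatrix,
        Matrix.rank_eq_finrank_range_toLin A (Pi.basisFun F (Fin n)) (Pi.basisFun F (Fin n))]
      rfl
    omega
  obtain ⟨N0, hN0, hT0⟩ := matrix_unit_add_sqz A0 (by rw [hcard]; exact hr)
  obtain ⟨s, hs, hTs⟩ := torsion_of_isUnit (k := ZMod p) (A0 + N0) hT0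
  let Φ : Matrix ι ι K →+* Matrix (Fin n) (Fin n) F :=
    (L.symm.toRingEquiv.toRingHom).comp
      (((Matrix.toLinAlgEquiv b).toRingEquiv.toRingHom).comp (algebraMap K F).mapMatrix)
  have hΦ : Φ A0 = A := by
    change L.symm (Matrix.toLin b b (A0.map (algebraMap K F))) = A
    rw [hA0, Matrix.toLin_toMatrix]
    simp
  refine ⟨Φ (A0 + N0), -Φ N0, hT0.map Φ, ⟨s, hs, ?_⟩, ?_, ?_⟩
  · rw [← map_pow, hTs, map_one]
  · rw [neg_sq, ← map_pow, hN0, map_zero]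
  · rw [map_add, hΦ]; abel
end

section
/- Over the rationals, every periodic matrix A ∈ M_n(ℚ) with rank(A) ≥ n/2 is the sum of a torsion matrix and a square-zero matrix. -/
open Polynomial

def TS {V : Type*} [AddCommGroup V] [Module ℚ V] (A : Module.End ℚ V) : Prop :=
  ∃ T N : Module.End ℚ V, (∃ s : ℕ, 1 ≤ s ∧ T ^ s = 1) ∧ N * N = 0 ∧ A = T + N

lemma TS.conj {V W : Type*} [AddCommGroup V] [Module ℚ V] [AddCommGroup W] [Module ℚ W]
    (e : V ≃ₗ[ℚ] W) {A : Module.End ℚ V} {B : Module.End ℚ W}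
    (h : ∀ v, e (A v) = B (e v)) (hB : TS B) : TS A := by
  obtain ⟨T, N, ⟨s, hs, hT⟩, hN, rfl⟩ := hB
  refine ⟨e.symm.conjRingEquiv T, e.symm.conjRingEquiv N, ⟨s, hs, ?_⟩, ?_, ?_⟩
  · rw [← map_pow, hT, map_one]
  · rw [← map_mul, hN, map_zero]
  · rw [← map_add]
    ext v
    apply e.injective
    rw [h]
    simp [LinearEquiv.conjRingEquiv]

lemma TS.pi {ι : Type*} [Fintype ι] {V : ι → Type*} [∀ i, AddCommGroup (V i)]
    [∀ i, Module ℚ (V i)] (A : ∀ i, Module.End ℚ (V i)) (h : ∀ i, TS (A i)) :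
    TS (LinearMap.pi fun i => (A i).comp (LinearMap.proj i)) := by
  choose T N hT hN hA using h
  choose s hs hT using hT
  refine ⟨LinearMap.pi fun i => (T i).comp (LinearMap.proj i),
    LinearMap.pi fun i => (N i).comp (LinearMap.proj i), ⟨∏ i, s i, ?_, ?_⟩, ?_, ?_⟩
  · exact Nat.one_le_iff_ne_zero.2 (Finset.prod_ne_zero_iff.2 fun i _ => by have := hs i; omega)
  · have key : ∀ n : ℕ, ∀ v i, ((LinearMap.pi fun i => (T i).comp (LinearMap.proj i) :
        Module.End ℚ (∀ i, V i)) ^ n) v i = (T i ^ n) (v i) := by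
      intro n
      induction n with
      | zero => intro v i; simp
      | succ n ih => intro v i; rw [pow_succ', pow_succ']; simp [ih]
    ext1 v
    funext i
    rw [key]
    obtain ⟨c, hc⟩ := Finset.dvd_prod_of_mem s (Finset.mem_univ i)
    rw [hc, pow_mul, hT, one_pow]; rfl
  · ext1 v
    funext i
    have := congrArg (fun f => f (v i)) (hN i)
    simpa using this
  · ext1 v
    funext i
    simp [hA]

lemma nextCoeff_cyclotomic (m : ℕ) (hm : 1 ≤ m) :
    (cyclotomic m ℚ).nextCoeff = - (ArithmeticFunction.moebius m : ℚ) := by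
  induction m using Nat.strong_induction_on with
  | _ m ih =>
    have h1 := prod_cyclotomic_eq_X_pow_sub_one (R := ℚ) hm
    have h2 : (∏ i ∈ m.divisors, cyclotomic i ℚ).nextCoeff
        = ∑ i ∈ m.divisors, (cyclotomic i ℚ).nextCoeff :=
      Monic.nextCoeff_prod _ _ (fun i _ => cyclotomic.monic i ℚ)
    have h3 : ∑ i ∈ m.divisors, (ArithmeticFunction.moebius i : ℚ) = if m = 1 then 1 else 0 := by
      have := ArithmeticFunction.coe_mul_zeta_apply (f := ArithmeticFunction.moebius) (x := m)
      rw [ArithmeticFunction.moebius_mul_coe_zeta, ArithmeticFunction.one_apply] at this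
      have h := congrArg (Int.cast : ℤ → ℚ) this
      push_cast at h
      exact h.symm
    have h4 : (X ^ m - 1 : ℚ[X]).nextCoeff = - if m = 1 then 1 else 0 := by
      have hd : (X ^ m - 1 : ℚ[X]).natDegree = m := natDegree_X_pow_sub_C (r := (1:ℚ))
      rw [nextCoeff_of_natDegree_pos (by omega), hd]
      rcases eq_or_ne m 1 with rfl | h
      · simp
      · rw [coeff_sub, coeff_X_pow, coeff_one, if_neg (by omega), if_neg (by omega), if_neg h]; simp
    rw [h1, h4] at h2
    rw [← Nat.cons_self_properDivisors (by omega), Finset.sum_cons] at h3 h2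
    have h5 : ∑ i ∈ m.properDivisors, (cyclotomic i ℚ).nextCoeff
        = - ∑ i ∈ m.properDivisors, (ArithmeticFunction.moebius i : ℚ) := by
      rw [← Finset.sum_neg_distrib]
      refine Finset.sum_congr rfl fun i hi => ?_
      have := Nat.mem_properDivisors.1 hi
      exact ih i this.2 (Nat.pos_of_dvd_of_pos this.1 (by omega))
    rw [h5, ← h3] at h2
    linarith

lemma exists_lift_adjoinRoot {W : Type*} [AddCommGroup W] [Module ℚ W] (f : ℚ[X])
    (φ : ℚ[X] →ₗ[ℚ] W) (h : ∀ p, φ (f * p) = 0) :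
    ∃ ψ : AdjoinRoot f →ₗ[ℚ] W, ∀ p, ψ (AdjoinRoot.mk f p) = φ p := by
  obtain ⟨σ, hσ⟩ := (AdjoinRoot.mkₐ (R := ℚ) f).toLinearMap.exists_rightInverse_of_surjective
    (LinearMap.range_eq_top.2 AdjoinRoot.mk_surjective)
  refine ⟨φ.comp σ, fun p => ?_⟩
  have h1 : AdjoinRoot.mk f (σ (AdjoinRoot.mk f p)) = AdjoinRoot.mk f p :=
    LinearMap.congr_fun hσ (AdjoinRoot.mk f p)
  obtain ⟨q, hq⟩ := AdjoinRoot.mk_eq_mk.1 h1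
  have h2 : σ (AdjoinRoot.mk f p) = p + f * q := by rw [← hq]; ring
  simp [h2, h]

/-- multiplication by the root -/
noncomputable def tmul (f : ℚ[X]) : Module.End ℚ (AdjoinRoot f) :=
  Algebra.lmul ℚ (AdjoinRoot f) (AdjoinRoot.root f)

lemma tmul_apply (f : ℚ[X]) (u : AdjoinRoot f) : tmul f u = AdjoinRoot.root f * u := rfl

/-- The bordered matrix. -/
noncomputable def bord (f : ℚ[X]) (z : ℕ) (g : AdjoinRoot f →ₗ[ℚ] degreeLT ℚ z) :
    Module.End ℚ (AdjoinRoot f × degreeLT ℚ z) :=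
  LinearMap.prod
    ((tmul f).comp (LinearMap.fst ℚ (AdjoinRoot f) (degreeLT ℚ z)) +
      (AdjoinRoot.mkₐ (R := ℚ) f).toLinearMap.comp
        ((degreeLT ℚ z).subtype.comp (LinearMap.snd ℚ (AdjoinRoot f) (degreeLT ℚ z))))
    (g.comp (LinearMap.fst ℚ (AdjoinRoot f) (degreeLT ℚ z)))

lemma bord_apply (f : ℚ[X]) (z : ℕ) (g : AdjoinRoot f →ₗ[ℚ] degreeLT ℚ z) (u : AdjoinRoot f)
    (k : degreeLT ℚ z) :
    bord f z g (u, k) = (AdjoinRoot.root f * u + AdjoinRoot.mk f (k : ℚ[X]), g u) := rfl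

/-- The bordered matrix of torsion type. -/
def Good (f : ℚ[X]) (z : ℕ) (M : Module.End ℚ (AdjoinRoot f × degreeLT ℚ z)) : Prop :=
  (∃ N : ℕ, 1 ≤ N ∧ M ^ N = 1) ∧
  (∀ u k, (M (u, k)).1 = AdjoinRoot.root f * u + AdjoinRoot.mk f (k : ℚ[X])) ∧
  (∀ k, (M (0, k)).2 = 0)

def GoodS (f : ℚ[X]) (z : ℕ) (ε : ℚ) : Prop :=
  ∃ M, Good f z M ∧ ∃ x, ε • x.1 - (M (M x)).1 = 1

/-- division by X as a linear map -/
noncomputable def divXL : ℚ[X] →ₗ[ℚ] ℚ[X] where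
  toFun := divX
  map_add' _ _ := divX_add
  map_smul' c p := by simp [smul_eq_C_mul, divX_C_mul]

lemma divX_X_mul (p : ℚ[X]) : divX (X * p) = p := by
  ext n; simp [coeff_divX]

/-- multiplication by X -/
noncomputable def mulXL (z : ℕ) : degreeLT ℚ z →ₗ[ℚ] degreeLT ℚ (z + 1) :=
  LinearMap.codRestrict _ ((LinearMap.mulLeft ℚ (X : ℚ[X])).comp (degreeLT ℚ z).subtype) (by
    intro p
    have hp := p.2
    rw [mem_degreeLT] at hp ⊢
    by_cases h : (p : ℚ[X]) = 0
    · simp [h]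
    · simp only [LinearMap.comp_apply, Submodule.subtype_apply, LinearMap.mulLeft_apply]
      rw [mul_comm, degree_mul_X]
      rw [degree_eq_natDegree h] at hp ⊢
      norm_cast at hp ⊢
      omega)

lemma mulXL_coe (z : ℕ) (p : degreeLT ℚ z) : ((mulXL z p : degreeLT ℚ (z+1)) : ℚ[X]) = X * (p : ℚ[X]) := rfl

lemma C_mem_degreeLT (z : ℕ) (hz : 1 ≤ z) (c : ℚ) : C c ∈ degreeLT ℚ z := by
  rw [mem_degreeLT]
  exact lt_of_le_of_lt degree_C_le (by exact_mod_cast hz)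

lemma X_mem_degreeLT (z : ℕ) (hz : 2 ≤ z) : (X : ℚ[X]) ∈ degreeLT ℚ z := by
  rw [mem_degreeLT, degree_X]
  exact_mod_cast hz

lemma degreeLT_decomp (z : ℕ) (k : degreeLT ℚ (z+1)) :
    ∃ (b : ℚ) (l : degreeLT ℚ z), k = b • (⟨C 1, C_mem_degreeLT _ (by omega) 1⟩ : degreeLT ℚ (z+1)) + mulXL z l := by
  refine ⟨(k : ℚ[X]).coeff 0, ⟨divX k, ?_⟩, ?_⟩
  · have := k.2
    rw [mem_degreeLT, degree_lt_iff_coeff_zero] at this ⊢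
    intro m hm
    rw [coeff_divX]
    exact this _ (by omega)
  · ext1
    simp only [Submodule.coe_add, Submodule.coe_smul, mulXL_coe]
    rw [smul_eq_C_mul, ← C_mul, mul_one, _root_.add_comm (C _), X_mul_divX_add]

lemma pow_fix {V : Type*} [AddCommGroup V] [Module ℚ V] (Q : Module.End ℚ V) (v : V)
    (h : Q v = v) (n : ℕ) : (Q ^ n) v = v := by
  induction n with
  | zero => rfl
  | succ n ih => rw [pow_succ, Module.End.mul_apply, h, ih]

lemma GoodS.step {f : ℚ[X]} {z : ℕ} (hz : 1 ≤ z) {ε : ℚ} (hε : ε * ε = 1) (h : GoodS f z ε) :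
    GoodS (X * f) (z + 1) (-ε) := by
  obtain ⟨M, ⟨⟨N, hN1, hN⟩, hM1, hM2⟩, x, hx⟩ := h
  -- the vector `xK`
  set xK : degreeLT ℚ z := ε • x.2 - (M (M x)).2 with hxK
  let one' : degreeLT ℚ (z+1) := ⟨C 1, C_mem_degreeLT _ (by omega) 1⟩
  let g : AdjoinRoot f →ₗ[ℚ] degreeLT ℚ z :=
    (LinearMap.snd ℚ _ _).comp (M.comp (LinearMap.inl ℚ _ _))
  have hM : ∀ u k, M (u, k) = (AdjoinRoot.root f * u + AdjoinRoot.mk f (k : ℚ[X]), g u) := by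
    intro u k
    refine Prod.ext (hM1 u k) ?_
    have : ((u, k) : AdjoinRoot f × degreeLT ℚ z) = (u, 0) + (0, k) := by simp
    rw [this, map_add, Prod.snd_add, hM2, add_zero]
    rfl
  obtain ⟨ι, hι⟩ := exists_lift_adjoinRoot f
    ((AdjoinRoot.mkₐ (R := ℚ) (X * f)).toLinearMap.comp (LinearMap.mulLeft ℚ (X : ℚ[X]))) (by
      intro p
      simp only [LinearMap.comp_apply, LinearMap.mulLeft_apply, AlgHom.toLinearMap_apply]
      rw [← mul_assoc]
      exact AdjoinRoot.mk_eq_zero.2 (dvd_mul_right _ _))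
  replace hι : ∀ p, ι (AdjoinRoot.mk f p) = AdjoinRoot.mk (X * f) (X * p) := hι
  let w : degreeLT ℚ (z+1) := ε • one' + mulXL z xK
  obtain ⟨g', hg'⟩ := exists_lift_adjoinRoot (X * f)
    ((lcoeff ℚ 0).smulRight w + (mulXL z).comp (g.comp
      ((AdjoinRoot.mkₐ (R := ℚ) f).toLinearMap.comp divXL))) (by
      intro p
      have h1 : divXL (X * f * p) = f * p := by
        rw [mul_assoc]; exact divX_X_mul _
      have h2 : AdjoinRoot.mk f (f * p) = 0 := AdjoinRoot.mk_eq_zero.2 (dvd_mul_right _ _)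
      change (X * f * p).coeff 0 • w + mulXL z (g (AdjoinRoot.mk f (divXL (X * f * p)))) = 0
      rw [h1, h2, mul_assoc, mul_coeff_zero, coeff_X_zero, zero_mul, zero_smul, map_zero, map_zero,
        add_zero])
  have hg1 : g' 1 = w := by
    have := hg' 1
    simpa [divXL] using this
  have hg2 : ∀ u, g' (ι u) = mulXL z (g u) := by
    intro u
    obtain ⟨p, rfl⟩ := AdjoinRoot.mk_surjective u
    rw [hι, hg']
    have h1 : divXL (X * p) = p := divX_X_mul _
    simp [h1]
  let M' := bord (X * f) (z + 1) g'
  have hM' : ∀ u k, M' (u, k) = (AdjoinRoot.root (X * f) * u + AdjoinRoot.mk (X * f) (k : ℚ[X]), g' u) :=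
    fun u k => rfl
  let F : (AdjoinRoot f × degreeLT ℚ z) →ₗ[ℚ] (AdjoinRoot (X * f) × degreeLT ℚ (z + 1)) :=
    ι.prodMap (mulXL z)
  have hF : ∀ u k, F (u, k) = (ι u, mulXL z k) := fun u k => rfl
  have hFM : ∀ v, M' (F v) = F (M v) := by
    rintro ⟨u, k⟩
    rw [hM, hF, hF, hM', hg2, map_add, hι, mulXL_coe]
    obtain ⟨p, rfl⟩ := AdjoinRoot.mk_surjective u
    congr 2
    rw [← AdjoinRoot.mk_X, ← AdjoinRoot.mk_X, ← map_mul, hι, hι]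
    simp only [map_mul]
  let k0 : AdjoinRoot (X * f) × degreeLT ℚ (z + 1) := (0, one')
  have hk0 : M' k0 = (1, 0) := by
    rw [hM']; simp [one']
  have he : M' (1, 0) = (AdjoinRoot.root (X * f), w) := by
    rw [hM', hg1]; simp
  have hιone : ι 1 = AdjoinRoot.root (X * f) := by
    have := hι 1
    rwa [map_one, mul_one, AdjoinRoot.mk_X] at this
  have hFx : F (ε • x - M (M x)) = (AdjoinRoot.root (X * f), mulXL z xK) := by
    have : ε • x - M (M x) = (1, xK) := Prod.ext hx rfl
    rw [this, hF, hιone]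
  let k' := k0 + F x
  have hk' : M' (M' k') = ε • k' := by
    have h1 : M' (M' k') = (AdjoinRoot.root (X * f), w) + F (M (M x)) := by
      simp only [k', map_add, hk0, he, hFM]
    have h2 : F (M (M x)) = ε • F x - (AdjoinRoot.root (X * f), mulXL z xK) := by
      rw [← hFx]; simp
    rw [h1, h2]
    have h3 : ((AdjoinRoot.root (X * f), w) : AdjoinRoot (X * f) × degreeLT ℚ (z + 1))
        = ε • k0 + (AdjoinRoot.root (X * f), mulXL z xK) := by
      simp [k0, w]
    rw [h3]
    simp only [k', smul_add]
    abel
  have hpow : ∀ n v, (M' ^ n) (F v) = F ((M ^ n) v) := by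
    intro n
    induction n with
    | zero => intro v; simp
    | succ n ih => intro v; rw [pow_succ, pow_succ]; simp [hFM, ih]
  have hM4 : (M' ^ 4) k' = k' := by
    have : (M' ^ 4) k' = M' (M' (M' (M' k'))) := by simp [pow_succ]
    rw [this, hk', map_smul, map_smul, hk', smul_smul, hε, one_smul]
  have hA : (M' ^ (4 * N)) k' = k' := by
    rw [pow_mul]
    exact pow_fix _ _ hM4 N
  have hB : (M' ^ (4 * N)) (M' k') = M' k' := by
    have : (M' ^ (4 * N)) (M' k') = (M' ^ (4 * N) * M') k' := rfl
    rw [this, ← pow_succ, pow_succ', Module.End.mul_apply, hA]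
  have hC : ∀ v, (M' ^ (4 * N)) (F v) = F v := by
    intro v
    rw [hpow, Nat.mul_comm 4 N, pow_mul, hN, one_pow]; rfl
  have hk0' : (M' ^ (4 * N)) k0 = k0 := by
    have : k0 = k' - F x := by simp [k']
    rw [this, map_sub, hA, hC]
  have he' : (M' ^ (4 * N)) (1, 0) = (1, 0) := by
    have : ((1, 0) : AdjoinRoot (X * f) × degreeLT ℚ (z + 1)) = M' k' - F (M x) := by
      rw [← hFM, ← map_sub, ← hk0]; simp [k']
    rw [this, map_sub, hB, hC]
  refine ⟨M', ⟨⟨4 * N, by omega, ?_⟩, fun u k => rfl, fun k => by rw [hM']; simp⟩, ?_⟩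
  · refine LinearMap.ext fun v => ?_
    obtain ⟨u, k⟩ := v
    obtain ⟨p, rfl⟩ := AdjoinRoot.mk_surjective u
    obtain ⟨b, l, hk⟩ := degreeLT_decomp z k
    have : ((AdjoinRoot.mk (X * f) p, k) : AdjoinRoot (X * f) × degreeLT ℚ (z + 1))
        = (p.coeff 0) • (1, 0) + b • k0 + F (AdjoinRoot.mk f (divX p), l) := by
      rw [hF, hk, hι]
      refine Prod.ext ?_ ?_
      · have h9 := congrArg (AdjoinRoot.mk (X * f)) (X_mul_divX_add p)
        rw [map_add, map_mul, AdjoinRoot.mk_X, AdjoinRoot.mk_C] at h9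
        simp only [k0, Algebra.smul_def, AdjoinRoot.algebraMap_eq, Prod.fst_add, Prod.smul_fst,
          mul_one, smul_zero, add_zero, map_mul, AdjoinRoot.mk_X, mul_zero]
        rw [_root_.add_comm]
        exact h9.symm
      · simp [k0, one']
    rw [this, map_add, map_add, map_smul, map_smul, hk0', he', hC]
    rfl
  · -- the new solution
    let κ : degreeLT ℚ (z + 1) := ⟨X + (xK : ℚ[X]), by
      refine Submodule.add_mem _ (X_mem_degreeLT _ (by omega)) ?_
      exact degreeLT_mono (by omega) xK.2⟩
    refine ⟨(-(ε / 2)) • (1, -κ), ?_⟩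
    have h1 : (M' (M' (1, -κ))).1 = ε • 1 := by
      have e1 : M' (1, -κ) = (AdjoinRoot.root (X * f) - AdjoinRoot.mk (X * f) (X + (xK : ℚ[X])), w) := by
        rw [hM', hg1]
        refine Prod.ext ?_ rfl
        simp [κ]
      rw [e1, hM']
      simp only [w, one', Submodule.coe_add, Submodule.coe_smul, mulXL_coe, map_add, map_mul, AdjoinRoot.mk_X]
      rw [smul_eq_C_mul, ← C_mul, mul_one]
      simp only [Algebra.smul_def, AdjoinRoot.algebraMap_eq, AdjoinRoot.mk_C, mul_one]
      ring
    rw [map_smul, map_smul, Prod.smul_fst, Prod.smul_fst, h1]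
    simp only [smul_smul, ← sub_smul]
    have : -ε * -(ε / 2) - -(ε / 2) * ε = 1 := by linear_combination hε
    rw [this, one_smul]

lemma finite_adjoinRoot' {f : ℚ[X]} (hf : f.Monic) : Module.Finite ℚ (AdjoinRoot f) :=
  (AdjoinRoot.powerBasis' hf).finite

lemma finrank_adjoinRoot' {f : ℚ[X]} (hf : f.Monic) :
    Module.finrank ℚ (AdjoinRoot f) = f.natDegree := by
  rw [(AdjoinRoot.powerBasis' hf).finrank, AdjoinRoot.powerBasis'_dim]

lemma finite_degreeLT' (z : ℕ) : Module.Finite ℚ (degreeLT ℚ z) :=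
  Module.Finite.equiv (degreeLTEquiv ℚ z).symm

lemma finrank_degreeLT' (z : ℕ) : Module.finrank ℚ (degreeLT ℚ z) = z := by
  rw [(degreeLTEquiv ℚ z).finrank_eq]; simp

/-- an equivalence from surjectivity and dimension count -/
lemma exists_equiv_of_surj {V W : Type*} [AddCommGroup V] [Module ℚ V] [AddCommGroup W] [Module ℚ W]
    [Module.Finite ℚ V] [Module.Finite ℚ W] (h : Module.finrank ℚ V = Module.finrank ℚ W)
    (θ : V →ₗ[ℚ] W) (hs : Function.Surjective θ) : ∃ e : V ≃ₗ[ℚ] W, ∀ v, e v = θ v :=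
  ⟨LinearEquiv.ofBijective θ ⟨(LinearMap.injective_iff_surjective_of_finrank_eq_finrank h).2 hs, hs⟩,
    fun _ => rfl⟩

lemma conj_pow_apply {V W : Type*} [AddCommGroup V] [Module ℚ V] [AddCommGroup W] [Module ℚ W]
    (e : V ≃ₗ[ℚ] W) (M : Module.End ℚ V) (Q : Module.End ℚ W) (h : ∀ v, e (M v) = Q (e v))
    (N : ℕ) (hQ : Q ^ N = 1) : M ^ N = 1 := by
  have : ∀ n v, e ((M ^ n) v) = (Q ^ n) (e v) := by
    intro n
    induction n with
    | zero => intro v; rfl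
    | succ n ih => intro v; rw [pow_succ, pow_succ, Module.End.mul_apply, Module.End.mul_apply, ih, h]
  refine LinearMap.ext fun v => e.injective ?_
  rw [this, hQ]; rfl

lemma tmul_pow (P : ℚ[X]) (N : ℕ) (h : P ∣ X ^ N - 1) : tmul P ^ N = 1 := by
  have h1 : (AdjoinRoot.root P) ^ N = 1 := by
    have := AdjoinRoot.mk_eq_zero.2 h
    rw [map_sub, map_pow, map_one, AdjoinRoot.mk_X] at this
    exact sub_eq_zero.1 this
  rw [tmul, ← map_pow, h1, map_one]

lemma exists_E (f P : ℚ[X]) (hf : f.Monic) : ∃ E : ℚ[X] →ₗ[ℚ] ℚ[X], ∀ p q r : ℚ[X],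
    p * P = r + f * q → r.degree < f.degree → E p = q := by
  have key : ∀ p q r : ℚ[X], p * P = r + f * q → r.degree < f.degree → (p * P) /ₘ f = q :=
    fun p q r h1 h2 => (div_modByMonic_unique q r hf ⟨h1.symm, h2⟩).1
  refine ⟨⟨⟨fun p => (p * P) /ₘ f, fun p q => ?_⟩, fun c p => ?_⟩, key⟩
  · refine key _ _ ((p * P) %ₘ f + (q * P) %ₘ f) ?_ ?_
    · have h1 := modByMonic_add_div (p * P) f
      have h2 := modByMonic_add_div (q * P) f
      linear_combination -h1 - h2
    · exact lt_of_le_of_lt (degree_add_le _ _)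
        (max_lt (degree_modByMonic_lt _ hf) (degree_modByMonic_lt _ hf))
  · refine key _ _ (C c * ((p * P) %ₘ f)) ?_ ?_
    · have h1 := modByMonic_add_div (p * P) f
      simp only [smul_eq_C_mul, RingHom.id_apply]
      linear_combination -(C c) * h1
    · refine lt_of_le_of_lt ?_ (degree_modByMonic_lt (p * P) hf)
      rw [← smul_eq_C_mul]; exact degree_smul_le _ _

lemma degree_X_mul_le {p f : ℚ[X]} (h : p.degree < f.degree) : (X * p).degree ≤ f.degree := by
  by_cases h0 : p = 0
  · simp [h0]
  · have hf : f ≠ 0 := by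
      rintro rfl
      simp at h
    rw [mul_comm, degree_mul_X]
    rw [degree_eq_natDegree h0, degree_eq_natDegree hf] at *
    norm_cast at *

lemma GoodS.base (f P : ℚ[X]) (hf : f.Monic) (hP : P.Monic) (hd : P.natDegree = f.natDegree + 1)
    (hdiff : (P - X * f).degree < f.degree) (N : ℕ) (hN : 1 ≤ N) (hdvd : P ∣ X ^ N - 1)
    (a b : ℚ[X]) (σ : ℚ) (hab : X + C σ = P * a + (X ^ 2 - 1) * b) : GoodS f 1 1 := by
  obtain ⟨E, hE⟩ := exists_E f P hf
  have hEf : ∀ m, E (f * m) = m * P := fun m => hE _ _ 0 (by ring) (by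
    rw [degree_zero, bot_lt_iff_ne_bot]; exact fun h => hf.ne_zero (degree_eq_bot.1 h))
  have hE1 : E 1 = X := hE _ _ (P - X * f) (by ring) hdiff
  have hEX : ∀ p, ∃ c : ℚ, X * E p = E (X * p) + C c := by
    intro p
    have h1 := modByMonic_add_div (p * P) f
    have h2 := modByMonic_add_div (X * p * P) f
    have d1 := degree_modByMonic_lt (p * P) hf
    have d2 := degree_modByMonic_lt (X * p * P) hf
    rw [← hE p _ _ h1.symm d1] at h1
    rw [← hE (X * p) _ _ h2.symm d2] at h2
    have h3 : f * (X * E p - E (X * p)) = (X * p * P) %ₘ f - X * ((p * P) %ₘ f) := by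
      linear_combination X * h1 - h2
    have d3 : (f * (X * E p - E (X * p))).degree ≤ f.degree := by
      rw [h3]
      refine (degree_sub_le _ _).trans (max_le d2.le ?_)
      exact degree_X_mul_le d1
    have d4 : (X * E p - E (X * p)).degree ≤ 0 := by
      rw [degree_mul] at d3
      by_contra h
      push Not at h
      have hne : X * E p - E (X * p) ≠ 0 := by
        intro h0; rw [h0] at h; simp at h
      rw [degree_eq_natDegree hne, degree_eq_natDegree hf.ne_zero] at *
      norm_cast at *
      omega
    refine ⟨_, eq_add_of_sub_eq' (eq_C_of_degree_le_zero d4)⟩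
  obtain ⟨θ1, hθ1⟩ := exists_lift_adjoinRoot f
    ((AdjoinRoot.mkₐ (R := ℚ) P).toLinearMap.comp E) (by
      intro p
      rw [LinearMap.comp_apply, hEf]
      exact AdjoinRoot.mk_eq_zero.2 (dvd_mul_left _ _))
  replace hθ1 : ∀ p, θ1 (AdjoinRoot.mk f p) = AdjoinRoot.mk P (E p) := hθ1
  let θ : AdjoinRoot f × degreeLT ℚ 1 →ₗ[ℚ] AdjoinRoot P :=
    θ1.coprod ((AdjoinRoot.mkₐ (R := ℚ) P).toLinearMap.comp (degreeLT ℚ 1).subtype)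
  have hθ : ∀ u k, θ (u, k) = θ1 u + AdjoinRoot.mk P (k : ℚ[X]) := fun _ _ => rfl
  have hk : ∀ k : degreeLT ℚ 1, ∃ c : ℚ, (k : ℚ[X]) = C c := by
    intro k
    have := k.2
    rw [mem_degreeLT] at this
    refine ⟨_, eq_C_of_degree_le_zero ?_⟩
    by_cases h : (k : ℚ[X]) = 0
    · simp [h]
    · rw [degree_eq_natDegree h] at this ⊢
      norm_cast at this ⊢
      omega
  have hroot : ∀ u k, ∃ c : degreeLT ℚ 1,
      AdjoinRoot.root P * θ (u, k) = θ (AdjoinRoot.root f * u + AdjoinRoot.mk f (k : ℚ[X]), c) ∧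
        (u = 0 → c = 0) := by
    intro u k
    obtain ⟨c', hc'⟩ := hk k
    obtain ⟨p, rfl⟩ := AdjoinRoot.mk_surjective u
    have h1 : E (C c') = C c' * X := by
      have := E.map_smul c' 1
      rwa [hE1, smul_eq_C_mul, smul_eq_C_mul, mul_one] at this
    by_cases hp : AdjoinRoot.mk f p = 0
    · refine ⟨0, ?_, fun _ => rfl⟩
      rw [hp, hθ, hθ, hc', map_zero, mul_zero, zero_add, zero_add, hθ1, h1]
      rw [map_mul, AdjoinRoot.mk_X, mul_comm, Submodule.coe_zero, map_zero, add_zero]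
    · obtain ⟨c, hc⟩ := hEX p
      refine ⟨⟨C c, C_mem_degreeLT _ le_rfl c⟩, ?_, fun h => absurd h hp⟩
      rw [hθ, hθ, hc', hθ1, ← AdjoinRoot.mk_X, ← AdjoinRoot.mk_X, ← map_mul, ← map_add (AdjoinRoot.mk f),
        hθ1, map_add E, h1, ← map_add, ← map_mul, ← map_add]
      congr 1
      linear_combination hc
  have hsurj : Function.Surjective θ := by
    have hinv : ∀ y ∈ LinearMap.range θ, AdjoinRoot.root P * y ∈ LinearMap.range θ := by
      rintro y ⟨⟨u, k⟩, rfl⟩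
      obtain ⟨c, hc, _⟩ := hroot u k
      exact ⟨_, hc.symm⟩
    intro y
    obtain ⟨p, rfl⟩ := AdjoinRoot.mk_surjective y
    change AdjoinRoot.mk P p ∈ LinearMap.range θ
    induction p using Polynomial.induction_on with
    | C c => exact ⟨(0, ⟨C c, C_mem_degreeLT _ le_rfl c⟩), by rw [hθ]; simp⟩
    | add p q hp hq => rw [map_add]; exact Submodule.add_mem _ hp hq
    | monomial n c h =>
      have : C c * X ^ (n + 1) = X * (C c * X ^ n) := by ring
      rw [this, map_mul, AdjoinRoot.mk_X]
      exact hinv _ h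
  have := finite_adjoinRoot' hf
  have := finite_adjoinRoot' hP
  have := finite_degreeLT' 1
  obtain ⟨e, he⟩ := exists_equiv_of_surj (by
    rw [Module.finrank_prod, finrank_adjoinRoot' hf, finrank_adjoinRoot' hP, finrank_degreeLT', hd]) θ hsurj
  let M : Module.End ℚ (AdjoinRoot f × degreeLT ℚ 1) := e.symm.toLinearMap.comp ((tmul P).comp e.toLinearMap)
  have hM : ∀ v, M v = e.symm (AdjoinRoot.root P * θ v) := fun v => by rw [← he]; rfl
  have heM : ∀ v, e (M v) = AdjoinRoot.root P * e v := fun v => by rw [hM, ← he]; simp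
  have hM' : ∀ u k, ∃ c, M (u, k) = (AdjoinRoot.root f * u + AdjoinRoot.mk f (k : ℚ[X]), c) ∧ (u = 0 → c = 0) := by
    intro u k
    obtain ⟨c, hc, hc0⟩ := hroot u k
    refine ⟨c, ?_, hc0⟩
    rw [hM, hc, ← he]; simp
  refine ⟨M, ⟨⟨N, hN, conj_pow_apply e M (tmul P) heM N (tmul_pow P N hdvd)⟩, ?_, ?_⟩, ?_⟩
  · intro u k
    obtain ⟨c, hc, _⟩ := hM' u k
    rw [hc]
  · intro k
    obtain ⟨c, hc, hc0⟩ := hM' 0 k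
    rw [hc]; exact hc0 rfl
  · refine ⟨e.symm (-AdjoinRoot.mk P b), ?_⟩
    have h0 : (1 : ℚ) • e.symm (-AdjoinRoot.mk P b) - M (M (e.symm (-AdjoinRoot.mk P b))) =
        (1, ⟨C σ, C_mem_degreeLT _ le_rfl σ⟩) := by
      apply e.injective
      rw [map_sub, heM, heM, one_smul, e.apply_symm_apply, he, hθ]
      rw [← map_one (AdjoinRoot.mk f), hθ1, hE1, ← map_neg, ← AdjoinRoot.mk_X, ← map_mul, ← map_mul,
        ← map_sub, ← map_add]
      refine AdjoinRoot.mk_eq_mk.2 ⟨-a, ?_⟩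
      linear_combination -hab
    exact congrArg Prod.fst h0

lemma diff_degree (f P : ℚ[X]) (hf : f.Monic) (hP : P.Monic) (hd : P.natDegree = f.natDegree + 1)
    (h1 : 1 ≤ f.natDegree) (hc : P.coeff f.natDegree = f.coeff (f.natDegree - 1)) :
    (P - X * f).degree < f.degree := by
  rw [degree_eq_natDegree hf.ne_zero, degree_lt_iff_coeff_zero]
  intro m hm
  obtain ⟨m, rfl⟩ : ∃ k, m = k + 1 := ⟨m - 1, by omega⟩
  rw [coeff_sub, coeff_X_mul]
  rcases Nat.lt_trichotomy m f.natDegree with h | h | h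
  · have : m + 1 = f.natDegree := by omega
    rw [this, hc, ← this]; simp
  · rw [h, ← hd, hP.coeff_natDegree, hf.coeff_natDegree, sub_self]
  · rw [coeff_eq_zero_of_natDegree_lt (by omega), coeff_eq_zero_of_natDegree_lt (by omega), sub_self]

lemma GoodS.base' (f P : ℚ[X]) (hf : f.Monic) (hP : P.Monic) (hd : P.natDegree = f.natDegree + 1)
    (h1 : 1 ≤ f.natDegree) (hc : P.coeff f.natDegree = f.coeff (f.natDegree - 1))
    (N : ℕ) (hN : 1 ≤ N) (hdvd : P ∣ X ^ N - 1) (δ : ℚ) (hδ : δ * δ = 1) (he : P.eval δ ≠ 0) :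
    GoodS f 1 1 := by
  have h2 := mul_divByMonic_eq_iff_isRoot (p := P - C (P.eval δ)) (a := δ)
  have h3 : (X - C δ) * ((P - C (P.eval δ)) /ₘ (X - C δ)) = P - C (P.eval δ) := h2.2 (by simp)
  set q := ((P - C (P.eval δ)) /ₘ (X - C δ))
  refine GoodS.base f P hf hP hd (diff_degree f P hf hP hd h1 hc) N hN hdvd
    (C (P.eval δ)⁻¹ * (X + C δ)) (-C (P.eval δ)⁻¹ * q) δ ?_
  have h4 : C (P.eval δ)⁻¹ * C (P.eval δ) = 1 := by rw [← C_mul, inv_mul_cancel₀ he, C_1]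
  have h5 : C δ * C δ = 1 := by rw [← C_mul, hδ, C_1]
  linear_combination -(X + C δ) * h4 + C (P.eval δ)⁻¹ * (X + C δ) * h3 +
     C (P.eval δ)⁻¹ * q * h5

lemma GoodS.exists0 (f : ℚ[X]) (hf : f.Monic) (h1 : 1 ≤ f.natDegree)
    (hc : f.coeff (f.natDegree - 1) = 0) : GoodS f 1 1 := by
  have hn : f.natDegree + 1 ≠ 0 := by omega
  have hdeg : (X ^ (f.natDegree + 1) + C 1 : ℚ[X]).natDegree = f.natDegree + 1 := natDegree_X_pow_add_C
  refine GoodS.base' f (X ^ (f.natDegree + 1) + C 1) hf (monic_X_pow_add_C _ hn) hdeg h1 ?_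
    (2 * (f.natDegree + 1)) (by omega) ⟨X ^ (f.natDegree + 1) - C 1, ?_⟩ 1 (by norm_num) ?_
  · rw [hc, coeff_add, coeff_X_pow, coeff_C]
    rw [if_neg (by omega), if_neg (by omega), add_zero]
  · simp only [C_1]; ring
  · simp

lemma GoodS.existsPM (f : ℚ[X]) (hf : f.Monic) (h1 : 1 ≤ f.natDegree) (δ : ℚ) (hδ : δ * δ = 1)
    (hc : f.coeff (f.natDegree - 1) = δ) : GoodS f 1 1 := by
  set n := f.natDegree + 1 with hn
  let P : ℚ[X] := ∑ i ∈ Finset.range (n + 1), X ^ i * (C δ) ^ (n + 1 - 1 - i)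
  have hPm : (X - C δ) * P = X ^ (n + 1) - (C δ) ^ (n + 1) :=
    (Commute.all _ _).mul_geom_sum₂ _
  have hcoeff : ∀ m, P.coeff m = if m < n + 1 then δ ^ (n - m) else 0 := by
    intro m
    simp only [P, finsetSum_coeff, ← C_pow, coeff_mul_C, coeff_X_pow]
    simp
  have hPd : (X ^ (n + 1) - C (δ ^ (n + 1)) : ℚ[X]).natDegree = n + 1 := natDegree_X_pow_sub_C
  have hmon : P.Monic := by
    have : ((X - C δ) * P).Monic := by
      rw [hPm, ← C_pow]; exact monic_X_pow_sub_C _ (by omega)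
    exact (monic_X_sub_C δ).of_mul_monic_left this
  have hdeg : P.natDegree = n := by
    have h := (monic_X_sub_C δ).natDegree_mul hmon
    rw [hPm, ← C_pow, hPd, natDegree_X_sub_C] at h
    omega
  refine GoodS.base' f P hf hmon hdeg h1 ?_ (2 * (n + 1)) (by omega) ?_ δ hδ ?_
  · rw [hcoeff, if_pos (by omega), hc]
    simp [hn]
  · refine Dvd.dvd.trans (Dvd.intro_left _ hPm) ⟨X ^ (n + 1) + (C δ) ^ (n + 1), ?_⟩
    have : (C δ) ^ (n + 1) * (C δ) ^ (n + 1) = 1 := by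
      rw [← mul_pow, ← C_mul, hδ, C_1, one_pow]
    linear_combination this
  · have h0 : δ ≠ 0 := by rintro rfl; simp at hδ
    have : P.eval δ = ∑ i ∈ Finset.range (n + 1), δ ^ n := by
      simp only [P, eval_finsetSum, eval_mul, eval_pow, eval_X, eval_C, ← pow_add]
      refine Finset.sum_congr rfl fun i hi => ?_
      rw [Finset.mem_range] at hi
      congr 1; omega
    rw [this]
    simp only [Finset.sum_const, Finset.card_range, nsmul_eq_mul]
    exact mul_ne_zero (by exact_mod_cast Nat.succ_ne_zero n) (pow_ne_zero _ h0)

lemma GoodS.iter (f : ℚ[X]) (h : GoodS f 1 1) (j : ℕ) : GoodS (X ^ j * f) (j + 1) ((-1) ^ j) := by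
  induction j with
  | zero => simpa using h
  | succ j ih =>
    have h1 := GoodS.step (by omega) (by rw [← mul_pow]; norm_num) ih
    rw [← mul_assoc, ← pow_succ'] at h1
    rwa [pow_succ (-1 : ℚ), mul_neg_one]

lemma modByMonicHom_mk_of_lt {f : ℚ[X]} (hf : f.Monic) (p : ℚ[X]) (hp : p.degree < f.degree) :
    AdjoinRoot.modByMonicHom hf (AdjoinRoot.mk f p) = p := by
  rw [AdjoinRoot.modByMonicHom_mk, (modByMonic_eq_self_iff hf).2 hp]

lemma exists_rep {f : ℚ[X]} (hf : f.Monic) (u : AdjoinRoot f) :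
    ∃ p : ℚ[X], p.degree < f.degree ∧ AdjoinRoot.mk f p = u := by
  obtain ⟨p, rfl⟩ := AdjoinRoot.mk_surjective u
  refine ⟨p %ₘ f, degree_modByMonic_lt _ hf, ?_⟩
  refine AdjoinRoot.mk_eq_mk.2 ⟨-(p /ₘ f), ?_⟩
  linear_combination modByMonic_add_div p f

lemma Good.correct {f0 f : ℚ[X]} (hf0 : f0.Monic) (hf : f.Monic) (hd : f.natDegree = f0.natDegree)
    {z : ℕ} (hz : z < f.natDegree) (r : degreeLT ℚ z) (hr : f = f0 + (r : ℚ[X]))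
    {M0 : Module.End ℚ (AdjoinRoot f0 × degreeLT ℚ z)} (h : Good f0 z M0) : ∃ M, Good f z M := by
  obtain ⟨⟨N, hN1, hN⟩, h1, h2⟩ := h
  have hdeg : f.degree = f0.degree := by
    rw [degree_eq_natDegree hf.ne_zero, degree_eq_natDegree hf0.ne_zero, hd]
  let rep := AdjoinRoot.modByMonicHom hf0
  let σ : AdjoinRoot f0 →ₗ[ℚ] AdjoinRoot f := (AdjoinRoot.mkₐ (R := ℚ) f).toLinearMap.comp rep
  let top : AdjoinRoot f0 →ₗ[ℚ] ℚ := (lcoeff ℚ (f.natDegree - 1)).comp rep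
  have hσ : ∀ p : ℚ[X], p.degree < f0.degree → σ (AdjoinRoot.mk f0 p) = AdjoinRoot.mk f p := by
    intro p hp
    change AdjoinRoot.mk f (rep _) = _
    rw [modByMonicHom_mk_of_lt hf0 p hp]
  have htop : ∀ p : ℚ[X], p.degree < f0.degree →
      top (AdjoinRoot.mk f0 p) = p.coeff (f.natDegree - 1) := by
    intro p hp
    change (rep _).coeff _ = _
    rw [modByMonicHom_mk_of_lt hf0 p hp]
  have hroot : ∀ u, σ (AdjoinRoot.root f0 * u) =
      AdjoinRoot.root f * σ u + top u • AdjoinRoot.mk f (r : ℚ[X]) := by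
    intro u
    obtain ⟨p, hp, rfl⟩ := exists_rep hf0 u
    rw [hσ p hp, htop p hp]
    set c := p.coeff (f.natDegree - 1)
    have hlt : (X * p - C c * f0).degree < f0.degree := by
      rw [degree_eq_natDegree hf0.ne_zero, degree_lt_iff_coeff_zero] at *
      intro m hm
      obtain ⟨m, rfl⟩ : ∃ k, m = k + 1 := ⟨m - 1, by omega⟩
      rw [coeff_sub, coeff_X_mul, coeff_C_mul]
      rcases Nat.eq_or_lt_of_le hm with h | h
      · rw [← h, hf0.coeff_natDegree, mul_one]
        have : m = f.natDegree - 1 := by omega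
        rw [this, sub_self]
      · rw [hp _ (by omega), coeff_eq_zero_of_natDegree_lt h]; simp
    have he : AdjoinRoot.root f0 * AdjoinRoot.mk f0 p = AdjoinRoot.mk f0 (X * p - C c * f0) := by
      simp
    rw [he, hσ _ hlt, ← AdjoinRoot.mk_X, ← map_mul, Algebra.smul_def, AdjoinRoot.algebraMap_eq,
      ← AdjoinRoot.mk_C, ← map_mul, ← map_add]
    refine AdjoinRoot.mk_eq_mk.2 ⟨-C c, ?_⟩
    rw [hr]; ring
  let F : (AdjoinRoot f0 × degreeLT ℚ z) →ₗ[ℚ] (AdjoinRoot f × degreeLT ℚ z) :=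
    LinearMap.prod (σ.comp (LinearMap.fst ℚ _ _))
      (LinearMap.snd ℚ _ _ + (top.smulRight r).comp (LinearMap.fst ℚ _ _))
  have hF : ∀ u k, F (u, k) = (σ u, k + top u • r) := fun _ _ => rfl
  have hsurj : Function.Surjective F := by
    rintro ⟨v, k⟩
    obtain ⟨p, hp, rfl⟩ := exists_rep hf v
    refine ⟨(AdjoinRoot.mk f0 p, k - top (AdjoinRoot.mk f0 p) • r), ?_⟩
    rw [hF, hσ p (hdeg ▸ hp)]; simp
  have := finite_adjoinRoot' hf
  have := finite_adjoinRoot' hf0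
  have := finite_degreeLT' z
  obtain ⟨e, he⟩ := exists_equiv_of_surj (by
    rw [Module.finrank_prod, Module.finrank_prod, finrank_adjoinRoot' hf, finrank_adjoinRoot' hf0, hd]) F hsurj
  have hdz : ∀ k : degreeLT ℚ z, (k : ℚ[X]).degree < (f.natDegree - 1 + 1 : ℕ) ∧
      (k : ℚ[X]).coeff (f.natDegree - 1) = 0 := by
    intro k
    have hk := k.2
    rw [mem_degreeLT] at hk
    refine ⟨hk.trans_le (by norm_cast; omega), ?_⟩
    exact coeff_eq_zero_of_degree_lt (hk.trans_le (by norm_cast; omega))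
  have hdz' : ∀ k : degreeLT ℚ z, (k : ℚ[X]).degree < f0.degree := by
    intro k
    have := (hdz k).1
    rwa [Nat.sub_add_cancel (by omega), hd, ← degree_eq_natDegree hf0.ne_zero] at this
  let M : Module.End ℚ (AdjoinRoot f × degreeLT ℚ z) :=
    e.toLinearMap.comp (M0.comp e.symm.toLinearMap)
  have hM : ∀ v, M (F v) = F (M0 v) := by
    intro v
    rw [← he, ← he]
    simp [M]
  refine ⟨M, ⟨N, hN1, ?_⟩, ?_, ?_⟩
  · refine conj_pow_apply e.symm M M0 (fun v => ?_) N hN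
    simp [M]
  · intro v k
    obtain ⟨⟨u, l⟩, hul⟩ := hsurj (v, k)
    rw [← hul, hM]
    rw [hF] at hul
    obtain ⟨rfl, rfl⟩ := Prod.mk.inj hul
    change σ (M0 (u, l)).1 = _
    rw [h1, map_add, hroot, hσ _ (hdz' l)]
    rw [Submodule.coe_add, Submodule.coe_smul, map_add, add_assoc, _root_.add_comm (AdjoinRoot.mk f _)]
    congr 2
  · intro k
    have h0 : ((0 : AdjoinRoot f), k) = F (0, k) := by rw [hF]; simp
    rw [h0, hM]
    change (M0 (0, k)).2 + top (M0 (0, k)).1 • r = 0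
    rw [h2, h1, mul_zero, zero_add, zero_add, htop _ (hdz' k), (hdz k).2]
    simp

lemma good_exists (f : ℚ[X]) (hf : f.Monic) (z : ℕ) (hz1 : 1 ≤ z) (hz : z < f.natDegree)
    (hc : f.coeff (f.natDegree - 1) = 0 ∨ f.coeff (f.natDegree - 1) * f.coeff (f.natDegree - 1) = 1) :
    ∃ M, Good f z M := by
  obtain ⟨j, rfl⟩ : ∃ j, z = j + 1 := ⟨z - 1, by omega⟩
  have hXm : (X ^ j : ℚ[X]).Monic := monic_X_pow j
  have h1 := modByMonic_add_div f (X ^ j)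
  have hrd := degree_modByMonic_lt f hXm
  set r := f %ₘ X ^ j
  set f1 := f /ₘ X ^ j
  rw [degree_X_pow] at hrd
  have hrd' : r.degree < f.degree := by
    rw [degree_eq_natDegree hf.ne_zero]
    exact hrd.trans (by norm_cast; omega)
  have hf0e : X ^ j * f1 = f - r := by linear_combination h1
  have hf0 : (X ^ j * f1).Monic := by
    rw [hf0e]; exact hf.sub_of_left hrd'
  have hf1 : f1.Monic := hXm.of_mul_monic_left hf0
  have hd0 : (X ^ j * f1).natDegree = f.natDegree := by
    rw [hf0e]
    exact natDegree_eq_of_degree_eq (degree_sub_eq_left_of_degree_lt hrd')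
  have hd1 : f1.natDegree + j = f.natDegree := by
    rw [← hd0, hXm.natDegree_mul hf1, natDegree_X_pow, add_comm]
  have hcc : f1.coeff (f1.natDegree - 1) = f.coeff (f.natDegree - 1) := by
    have h3 : (X ^ j * f1).coeff (f1.natDegree - 1 + j) = f1.coeff (f1.natDegree - 1) :=
      coeff_X_pow_mul _ _ _
    rw [← h3, hf0e, coeff_sub]
    have : f1.natDegree - 1 + j = f.natDegree - 1 := by omega
    rw [this, coeff_eq_zero_of_degree_lt (p := r) (hrd.trans_le (by norm_cast; omega)), sub_zero]
  have hG : GoodS f1 1 1 := by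
    rcases hc with hc | hc
    · exact GoodS.exists0 f1 hf1 (by omega) (by rw [hcc, hc])
    · exact GoodS.existsPM f1 hf1 (by omega) _ hc hcc
  obtain ⟨M0, hM0, _⟩ := hG.iter f1 j
  refine Good.correct hf0 hf hd0.symm hz ⟨r, ?_⟩ (by rw [hf0e]; simp) hM0
  rw [mem_degreeLT]
  exact hrd.trans (by norm_cast; omega)

lemma TS_of_good {f : ℚ[X]} {z : ℕ} {M : Module.End ℚ (AdjoinRoot f × degreeLT ℚ z)} (h : Good f z M) :
    ∃ g : AdjoinRoot f →ₗ[ℚ] degreeLT ℚ z,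
      (∀ u k, M (u, k) = (AdjoinRoot.root f * u + AdjoinRoot.mk f (k : ℚ[X]), g u)) ∧
      Function.Injective M ∧
      TS (LinearMap.prod ((tmul f).comp (LinearMap.fst ℚ (AdjoinRoot f) (degreeLT ℚ z)))
        (g.comp (LinearMap.fst ℚ (AdjoinRoot f) (degreeLT ℚ z)))) := by
  obtain ⟨⟨N, hN1, hN⟩, hM1, hM2⟩ := h
  let g : AdjoinRoot f →ₗ[ℚ] degreeLT ℚ z :=
    (LinearMap.snd ℚ _ _).comp (M.comp (LinearMap.inl ℚ _ _))
  have hM : ∀ u k, M (u, k) = (AdjoinRoot.root f * u + AdjoinRoot.mk f (k : ℚ[X]), g u) := by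
    intro u k
    refine Prod.ext (hM1 u k) ?_
    have : ((u, k) : AdjoinRoot f × degreeLT ℚ z) = (u, 0) + (0, k) := by simp
    rw [this, map_add, Prod.snd_add, hM2, add_zero]
    rfl
  refine ⟨g, hM, ?_, M, _, ⟨N, hN1, hN⟩, ?_, (add_sub_cancel M _).symm⟩
  · intro v w hvw
    have h1 : ∀ v, (M ^ N) v = v := fun v => by rw [hN]; rfl
    obtain ⟨n, rfl⟩ : ∃ n, N = n + 1 := ⟨N - 1, by omega⟩
    rw [← h1 v, ← h1 w, pow_succ, Module.End.mul_apply, Module.End.mul_apply, hvw]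
  · have h3 : ∀ v, (LinearMap.prod ((tmul f).comp (LinearMap.fst ℚ (AdjoinRoot f) (degreeLT ℚ z)))
        (g.comp (LinearMap.fst ℚ (AdjoinRoot f) (degreeLT ℚ z))) - M) v =
        (-AdjoinRoot.mk f (v.2 : ℚ[X]), 0) := by
      rintro ⟨u, k⟩
      rw [LinearMap.sub_apply, hM]
      refine Prod.ext ?_ ?_
      · simp [tmul_apply]
      · simp
    refine LinearMap.ext fun v => ?_
    rw [Module.End.mul_apply, h3, h3]
    simp

lemma root_pow_eq_one {f : ℚ[X]} {m : ℕ} (h : f ∣ X ^ m - 1) : AdjoinRoot.root f ^ m = 1 := by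
  have := AdjoinRoot.mk_eq_zero.2 h
  rw [map_sub, map_pow, map_one, AdjoinRoot.mk_X] at this
  exact sub_eq_zero.1 this

lemma block_a {f : ℚ[X]} (hf : f.Monic) {m : ℕ} (hm : 1 ≤ m) (hdvd : f ∣ X ^ m - 1) {z : ℕ}
    {M : Module.End ℚ (AdjoinRoot f × degreeLT ℚ z)} (h : Good f z M) :
    TS ((tmul f).prodMap (0 : Module.End ℚ (Fin z → ℚ))) := by
  obtain ⟨g, -, -, hTS⟩ := TS_of_good h
  have hs : AdjoinRoot.root f ^ (m - 1) * AdjoinRoot.root f = 1 := by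
    rw [← pow_succ, Nat.sub_add_cancel hm, root_pow_eq_one hdvd]
  set s := AdjoinRoot.root f ^ (m - 1)
  let L : (AdjoinRoot f × (Fin z → ℚ)) →ₗ[ℚ] (AdjoinRoot f × degreeLT ℚ z) :=
    LinearMap.prod (LinearMap.fst ℚ _ _)
      ((degreeLTEquiv ℚ z).symm.toLinearMap.comp (LinearMap.snd ℚ _ _) +
        (g.comp (Algebra.lmul ℚ (AdjoinRoot f) s)).comp (LinearMap.fst ℚ _ _))
  have hL : ∀ u k, L (u, k) = (u, (degreeLTEquiv ℚ z).symm k + g (s * u)) := fun _ _ => rfl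
  have := finite_adjoinRoot' hf
  have := finite_degreeLT' z
  obtain ⟨e, he⟩ := exists_equiv_of_surj (by
    rw [Module.finrank_prod, Module.finrank_prod, finrank_degreeLT']; simp) L (by
      rintro ⟨u, k⟩
      refine ⟨(u, degreeLTEquiv ℚ z (k - g (s * u))), ?_⟩
      rw [hL]; simp)
  refine TS.conj e ?_ hTS
  rintro ⟨u, k⟩
  rw [he, he, hL]
  change L (AdjoinRoot.root f * u, 0) = (AdjoinRoot.root f * u, g u)
  rw [hL, map_zero, zero_add, ← mul_assoc, hs, one_mul]

lemma block_c {f : ℚ[X]} (hf : f.Monic) {m : ℕ} (hm : 1 ≤ m) (hdvd : f ∣ X ^ m - 1) :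
    TS ((tmul f).prodMap (0 : Module.End ℚ (Fin f.natDegree → ℚ))) := by
  have := finite_adjoinRoot' hf
  have hr := root_pow_eq_one hdvd
  let e0 : (Fin f.natDegree → ℚ) ≃ₗ[ℚ] AdjoinRoot f := LinearEquiv.ofFinrankEq _ _ (by
    rw [finrank_adjoinRoot' hf]; simp)
  refine TS.conj (B := (tmul f).prodMap (0 : Module.End ℚ (AdjoinRoot f)))
    ((LinearEquiv.refl ℚ (AdjoinRoot f)).prodCongr e0) ?_ ?_
  · rintro ⟨u, k⟩
    refine Prod.ext ?_ ?_ <;> simp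
  let a := LinearMap.fst ℚ (AdjoinRoot f) (AdjoinRoot f)
  let b := LinearMap.snd ℚ (AdjoinRoot f) (AdjoinRoot f)
  let T : Module.End ℚ (AdjoinRoot f × AdjoinRoot f) :=
    LinearMap.prod (-(tmul f).comp b) ((tmul f).comp (a + b))
  let N : Module.End ℚ (AdjoinRoot f × AdjoinRoot f) :=
    LinearMap.prod ((tmul f).comp (a + b)) (-(tmul f).comp (a + b))
  set t := AdjoinRoot.root f
  have hT : ∀ v, T v = (-(t * v.2), t * (v.1 + v.2)) := fun _ => rfl
  have hN : ∀ v, N v = (t * (v.1 + v.2), -(t * (v.1 + v.2))) := fun _ => rfl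
  refine ⟨T, N, ⟨6 * m, by omega, ?_⟩, ?_, ?_⟩
  · have h6 : ∀ v, (T ^ 6) v = (t ^ 6 * v.1, t ^ 6 * v.2) := by
      intro v
      simp only [pow_succ T, pow_zero, one_mul, Module.End.mul_apply, hT]
      refine Prod.ext ?_ ?_ <;> (simp only; ring)
    have h6n : ∀ n v, ((T ^ 6) ^ n) v = ((t ^ 6) ^ n * v.1, (t ^ 6) ^ n * v.2) := by
      intro n
      induction n with
      | zero => intro v; simp
      | succ n ih =>
        intro v
        rw [pow_succ, Module.End.mul_apply, ih, h6]
        refine Prod.ext ?_ ?_ <;> (simp only; ring)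
    refine LinearMap.ext fun v => ?_
    rw [pow_mul, h6n, ← pow_mul, mul_comm 6 m, pow_mul, hr]
    simp
  · refine LinearMap.ext fun v => ?_
    rw [Module.End.mul_apply, hN, hN]
    simp
  · refine LinearMap.ext fun v => ?_
    rw [LinearMap.add_apply, hN, hT]
    refine Prod.ext ?_ ?_
    · change t * v.1 = -(t * v.2) + t * (v.1 + v.2)
      ring
    · simp

lemma block_d {f : ℚ[X]} {m : ℕ} (hm : 1 ≤ m) (hdvd : f ∣ X ^ m - 1) :
    TS ((tmul f).prodMap (0 : Module.End ℚ (Fin 0 → ℚ))) := by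
  refine ⟨(tmul f).prodMap (0 : Module.End ℚ (Fin 0 → ℚ)), 0, ⟨m, hm, ?_⟩, by simp, by simp⟩
  refine LinearMap.ext fun v => ?_
  have : ∀ n, (((tmul f).prodMap (0 : Module.End ℚ (Fin 0 → ℚ))) ^ n) v = ((tmul f ^ n) v.1, v.2) := by
    intro n
    induction n with
    | zero => rfl
    | succ n ih =>
      rw [pow_succ', Module.End.mul_apply, ih, pow_succ']
      exact Prod.ext rfl (Subsingleton.elim _ _)
  rw [this, tmul_pow f m hdvd]; rfl

lemma block_b' (f : ℚ[X]) (d j : ℕ) (hf : f = X ^ d) (h1d : 1 ≤ d)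
    (M : Module.End ℚ (AdjoinRoot f × degreeLT ℚ (j + 1))) (hM : Good f (j + 1) M) :
    TS ((tmul (X ^ (d + 1))).prodMap (0 : Module.End ℚ (Fin j → ℚ))) := by
  have hfm : f.Monic := hf ▸ monic_X_pow d
  have hfd : f.natDegree = d := by rw [hf]; exact natDegree_X_pow d
  obtain ⟨g, hMg, hinj, hTS⟩ := TS_of_good hM
  set A : Module.End ℚ (AdjoinRoot f × degreeLT ℚ (j + 1)) :=
    LinearMap.prod ((tmul f).comp (LinearMap.fst ℚ (AdjoinRoot f) (degreeLT ℚ (j + 1))))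
        (g.comp (LinearMap.fst ℚ (AdjoinRoot f) (degreeLT ℚ (j + 1))))
  have hA : ∀ v, A v = (AdjoinRoot.root f * v.1, g v.1) := fun _ => rfl
  set t := AdjoinRoot.root f
  have htd : t ^ d = 0 := by
    have h9 : AdjoinRoot.mk f (X ^ d) = 0 := AdjoinRoot.mk_eq_zero.2 (by rw [hf])
    rwa [map_pow, AdjoinRoot.mk_X] at h9
  have hAn : ∀ n v, (A ^ (n + 1)) v = (t ^ (n + 1) * v.1, g (t ^ n * v.1)) := by
    intro n
    induction n with
    | zero => intro v; simp [hA]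
    | succ n ih =>
      intro v
      rw [pow_succ', Module.End.mul_apply, ih, hA]
      refine Prod.ext ?_ rfl
      simp only; ring
  have hAd : A ^ (d + 1) = 0 := by
    refine LinearMap.ext fun v => ?_
    rw [hAn, pow_succ, htd]; simp
  have htne : t ^ (d - 1) ≠ 0 := by
    intro h
    have h : AdjoinRoot.mk f (X ^ (d - 1)) = 0 := by rw [map_pow, AdjoinRoot.mk_X]; exact h
    rw [AdjoinRoot.mk_eq_zero, hf] at h
    have := (pow_dvd_pow_iff (X_ne_zero : (X : ℚ[X]) ≠ 0) (not_isUnit_X)).1 h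
    omega
  set κ := g (t ^ (d - 1)) with hκ
  have hκ0 : κ ≠ 0 := by
    intro h
    have h1 : M (t ^ (d - 1), 0) = 0 := by
      rw [hMg, ← hκ, h, ← pow_succ', Nat.sub_add_cancel (by omega), htd]; simp
    have h2 := hinj (h1.trans (map_zero M).symm)
    exact htne (congrArg Prod.fst h2)
  have hAκ : (A ^ d) (1, 0) = (0, κ) := by
    obtain ⟨n, hn⟩ : ∃ n, d = n + 1 := ⟨d - 1, by omega⟩
    have h1 := hAn n (1, 0)
    rw [← hn, htd] at h1
    rw [h1, hκ, hn]; simp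
  have := finite_degreeLT' (j + 1)
  have := finite_adjoinRoot' hfm
  have := finite_adjoinRoot' (monic_X_pow (R := ℚ) (d + 1))
  obtain ⟨K, hK⟩ := Submodule.exists_isCompl (Submodule.span ℚ {κ})
  have hKr : Module.finrank ℚ K = j := by
    have h1 := Submodule.finrank_add_eq_of_isCompl hK
    rw [finrank_span_singleton hκ0, finrank_degreeLT'] at h1
    omega
  have : Module.Free ℚ K := Module.Free.of_divisionRing ℚ K
  let e0 : (Fin j → ℚ) ≃ₗ[ℚ] K := LinearEquiv.ofFinrankEq _ _ (by rw [hKr]; simp)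
  obtain ⟨ψ, hψ⟩ := exists_lift_adjoinRoot (X ^ (d + 1))
    ((LinearMap.applyₗ (1, 0)).comp (aeval (R := ℚ) A).toLinearMap) (by
      intro p
      change (aeval A (X ^ (d + 1) * p)) (1, 0) = 0
      rw [mul_comm, map_mul, map_pow, aeval_X, hAd]; simp)
  replace hψ : ∀ p, ψ (AdjoinRoot.mk (X ^ (d + 1)) p) = (aeval A p) (1, 0) := hψ
  let L : (AdjoinRoot (X ^ (d + 1) : ℚ[X]) × (Fin j → ℚ)) →ₗ[ℚ] (AdjoinRoot f × degreeLT ℚ (j + 1)) :=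
    ψ.coprod ((LinearMap.inr ℚ _ _).comp (K.subtype.comp e0.toLinearMap))
  have hL : ∀ u k, L (u, k) = ψ u + (0, (e0 k : degreeLT ℚ (j + 1))) := fun _ _ => rfl
  have hfst : ∀ p : ℚ[X], ((aeval A p) (1, 0)).1 = AdjoinRoot.mk f p := by
    have h1 : ∀ p v, ((aeval A p) v).1 = AdjoinRoot.mk f p * v.1 := by
      intro p
      induction p using Polynomial.induction_on with
      | C c => intro v; simp [Algebra.smul_def]
      | add p q hp hq => intro v; simp [hp, hq, add_mul]
      | monomial n c h =>
        intro v
        rw [pow_succ, ← mul_assoc, map_mul, Module.End.mul_apply, h, aeval_X, hA, map_mul _ _ X,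
          AdjoinRoot.mk_X]
        ring
    intro p
    rw [h1, mul_one]
  have hsurj : Function.Surjective L := by
    have hk : ∀ k : degreeLT ℚ (j + 1), (0, k) ∈ LinearMap.range L := by
      intro k
      have hk : k ∈ Submodule.span ℚ {κ} ⊔ K := by rw [hK.sup_eq_top]; trivial
      obtain ⟨a, ha, b, hb, rfl⟩ := Submodule.mem_sup.1 hk
      obtain ⟨x, rfl⟩ := Submodule.mem_span_singleton.1 ha
      refine ⟨(x • AdjoinRoot.mk _ (X ^ d), e0.symm ⟨b, hb⟩), ?_⟩
      rw [hL, map_smul, hψ, map_pow, aeval_X, hAκ]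
      simp
    rintro ⟨u, k⟩
    obtain ⟨p, rfl⟩ := AdjoinRoot.mk_surjective u
    have h1 : ((AdjoinRoot.mk f p, k) : AdjoinRoot f × degreeLT ℚ (j + 1)) =
        L (AdjoinRoot.mk _ p, 0) + (0, k - ((aeval A p) (1, 0)).2) := by
      rw [hL, hψ]
      refine Prod.ext ?_ ?_
      · simp [hfst]
      · simp
    change _ ∈ LinearMap.range L
    rw [h1]
    exact Submodule.add_mem _ ⟨_, rfl⟩ (hk _)
  obtain ⟨e, he⟩ := exists_equiv_of_surj (by
    rw [Module.finrank_prod, Module.finrank_prod, finrank_degreeLT', finrank_adjoinRoot' hfm,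
      finrank_adjoinRoot' (monic_X_pow (R := ℚ) (d + 1)), hfd, natDegree_X_pow]
    simp; omega) L hsurj
  refine TS.conj e ?_ hTS
  rintro ⟨u, k⟩
  rw [he, he]
  change L (AdjoinRoot.root _ * u, 0) = _
  obtain ⟨p, rfl⟩ := AdjoinRoot.mk_surjective u
  rw [← AdjoinRoot.mk_X, ← map_mul, hL, hψ, hL, hψ, map_mul, aeval_X, map_add]
  have : A (0, (e0 k : degreeLT ℚ (j + 1))) = 0 := by rw [hA]; simp
  rw [this]
  simp

lemma block_b (j c : ℕ) (hc : 1 ≤ c) :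
    TS ((tmul (X ^ (j + c + 1))).prodMap (0 : Module.End ℚ (Fin j → ℚ))) := by
  have hG : GoodS (X ^ c : ℚ[X]) 1 1 := by
    refine GoodS.exists0 _ (monic_X_pow c) (by rw [natDegree_X_pow]; exact hc) ?_
    rw [natDegree_X_pow, coeff_X_pow, if_neg (by omega)]
  obtain ⟨M, hM, -⟩ := hG.iter _ j
  exact block_b' _ (j + c) j (pow_add _ _ _).symm (by omega) M hM

lemma quot_equiv {f q : ℚ[X]} (h : Associated f q) :
    ∃ e : (ℚ[X] ⧸ Submodule.span ℚ[X] {f}) ≃ₗ[ℚ] AdjoinRoot q,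
      ∀ x, e ((X : ℚ[X]) • x) = AdjoinRoot.root q * e x := by
  have hs : Submodule.span ℚ[X] {f} = Submodule.span ℚ[X] {q} :=
    Ideal.span_singleton_eq_span_singleton.2 h
  let e1 := (Submodule.quotEquivOfEq _ _ hs).restrictScalars ℚ
  let e2 : (ℚ[X] ⧸ Submodule.span ℚ[X] {q}) ≃ₗ[ℚ] AdjoinRoot q :=
    LinearEquiv.refl ℚ (ℚ[X] ⧸ Submodule.span ℚ[X] {q})
  refine ⟨e1.trans e2, fun x => ?_⟩
  obtain ⟨p, rfl⟩ := Submodule.Quotient.mk_surjective _ x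
  rfl

lemma prime_power_class {p : ℚ[X]} (hp : Irreducible p) (e k N : ℕ) (hN : 1 ≤ N)
    (hd : p ^ e ∣ X ^ k * (X ^ N - 1)) :
    ∃ q : ℚ[X], Associated (p ^ e) q ∧ ((∃ a, q = X ^ a) ∨ ∃ m, 1 ≤ m ∧ q = cyclotomic m ℚ) := by
  rcases Nat.eq_zero_or_pos e with rfl | he
  · exact ⟨X ^ 0, by simp, Or.inl ⟨0, rfl⟩⟩
  by_cases hX : p ∣ X
  · have h1 : Associated p X := hp.associated_of_dvd irreducible_X hX
    exact ⟨X ^ e, h1.pow_pow, Or.inl ⟨e, rfl⟩⟩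
  · have hcop : IsCoprime p X := (hp.coprime_iff_not_dvd).2 hX
    have h2 : p ^ e ∣ X ^ N - 1 := (hcop.pow (m := e) (n := k)).dvd_of_dvd_mul_left hd
    have hsq : Squarefree (X ^ N - 1 : ℚ[X]) :=
      (X_pow_sub_one_separable_iff.2 (by exact_mod_cast (by omega : N ≠ 0))).squarefree
    have he1 : e = 1 := by
      by_contra hne
      have h3 : p * p ∣ X ^ N - 1 := by
        rw [← sq]
        exact (pow_dvd_pow p (by omega)).trans h2
      exact hp.not_isUnit (hsq p h3)
    subst he1
    rw [pow_one] at *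
    rw [← prod_cyclotomic_eq_X_pow_sub_one (by omega) ℚ] at h2
    obtain ⟨i, hi, h4⟩ := hp.prime.exists_mem_finset_dvd h2
    have hi0 : 0 < i := Nat.pos_of_mem_divisors hi
    exact ⟨cyclotomic i ℚ, hp.associated_of_dvd (cyclotomic.irreducible_rat hi0) h4,
      Or.inr ⟨i, hi0, rfl⟩⟩

lemma decomposition {V : Type} [AddCommGroup V] [Module ℚ V] [Module.Finite ℚ V]
    (A : Module.End ℚ V) (m k : ℕ) (hkm : k < m) (hA : A ^ m = A ^ k) :
    ∃ (ι : Type) (_ : Fintype ι) (q : ι → ℚ[X]),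
      (∀ i, (∃ a, q i = X ^ a) ∨ ∃ m, 1 ≤ m ∧ q i = cyclotomic m ℚ) ∧
      ∃ e : V ≃ₗ[ℚ] (∀ i, AdjoinRoot (q i)), ∀ v i, e (A v) i = AdjoinRoot.root (q i) * e v i := by
  classical
  set F : ℚ[X] := X ^ k * (X ^ (m - k) - 1) with hF
  have hF0 : F ≠ 0 := by
    refine mul_ne_zero (pow_ne_zero _ X_ne_zero) ?_
    have : (X ^ (m - k) - C 1 : ℚ[X]) ≠ 0 := X_pow_sub_C_ne_zero (by omega) 1
    simpa using this
  have hFA : aeval A F = 0 := by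
    have : F = X ^ m - X ^ k := by
      rw [hF, mul_sub, ← pow_add, Nat.add_sub_cancel' hkm.le, mul_one]
    rw [this]; simp [hA]
  have hkill : ∀ x : Module.AEval' A, F • x = 0 := by
    intro x
    obtain ⟨v, rfl⟩ := (Module.AEval'.of A).surjective x
    have h1 := Module.AEval.of_aeval_smul (R := ℚ) (M := V) A F v
    rw [hFA] at h1
    refine h1.symm.trans ?_
    simp
  have htor : Module.IsTorsion ℚ[X] (Module.AEval' A) := by
    intro x
    exact ⟨⟨F, mem_nonZeroDivisors_of_ne_zero hF0⟩, hkill x⟩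
  obtain ⟨ι, hι, p, hp, e, ⟨E⟩⟩ := Module.equiv_directSum_of_isTorsion htor
  let E1 := E.trans (DirectSum.linearEquivFunOnFintype ℚ[X] ι (fun i => ℚ[X] ⧸ Submodule.span ℚ[X] {p i ^ e i}))
  have hdvd : ∀ i, p i ^ e i ∣ F := by
    intro i
    obtain ⟨x, hx⟩ := E1.surjective (Pi.single i (Submodule.Quotient.mk 1))
    have h1 : F • E1 x = 0 := by rw [← map_smul, hkill, map_zero]
    have h2 := congrFun h1 i
    rw [hx] at h2
    rw [Pi.smul_apply, Pi.single_eq_same, ← Submodule.Quotient.mk_smul] at h2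
    rw [Pi.zero_apply, Submodule.Quotient.mk_eq_zero] at h2
    simpa [Ideal.submodule_span_eq, Ideal.mem_span_singleton] using h2
  choose q hq1 hq2 using fun i => prime_power_class (hp i) (e i) k (m - k) (by omega) (hdvd i)
  choose e' he' using fun i => quot_equiv (hq1 i)
  refine ⟨ι, hι, q, hq2, ((Module.AEval'.of A).trans (E1.restrictScalars ℚ)).trans
    (LinearEquiv.piCongrRight e'), fun v i => ?_⟩
  change e' i (E1 (Module.AEval'.of A (A v)) i) = AdjoinRoot.root (q i) * e' i (E1 (Module.AEval'.of A v) i)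
  rw [← he', ← Module.AEval'.X_smul_of, map_smul]
  rfl

lemma X_not_dvd_cyclotomic {m : ℕ} : ¬ (X : ℚ[X]) ∣ cyclotomic m ℚ ∨ m = 0 := by
  rcases Nat.eq_zero_or_pos m with h | h
  · exact Or.inr h
  left
  intro h1
  have h2 : (X : ℚ[X]) ∣ X ^ m - 1 := h1.trans (cyclotomic.dvd_X_pow_sub_one m ℚ)
  have h3 : (X : ℚ[X]) ∣ 1 := (dvd_sub_right (dvd_pow_self X (by omega))).1 h2
  exact not_isUnit_X (isUnit_of_dvd_one h3)

open Classical in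
lemma block_all {q : ℚ[X]} (h : (∃ a, q = X ^ a) ∨ ∃ m, 1 ≤ m ∧ q = cyclotomic m ℚ) (hne : q ≠ X)
    {z : ℕ} (hz : z ≤ q.natDegree - (if X ∣ q then 2 else 0)) :
    TS ((tmul q).prodMap (0 : Module.End ℚ (Fin z → ℚ))) := by
  rcases h with ⟨a, rfl⟩ | ⟨m, hm, rfl⟩
  · rw [natDegree_X_pow] at hz
    rcases Nat.lt_trichotomy a 1 with h | h | h
    · have ha : a = 0 := by omega
      subst ha
      obtain rfl : z = 0 := by omega
      exact block_d (m := 1) le_rfl (by simp)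
    · subst h; simp at hne
    · rw [if_pos (dvd_pow_self X (by omega))] at hz
      have := block_b z (a - z - 1) (by omega)
      have h2 : z + (a - z - 1) + 1 = a := by omega
      rwa [h2] at this
  · have hX : ¬ (X : ℚ[X]) ∣ cyclotomic m ℚ := X_not_dvd_cyclotomic.resolve_right (by omega)
    rw [if_neg hX, Nat.sub_zero] at hz
    have hmon := cyclotomic.monic m ℚ
    have hdvd := cyclotomic.dvd_X_pow_sub_one m ℚ
    rcases Nat.eq_zero_or_pos z with rfl | hz0
    · exact block_d hm hdvd
    rcases Nat.eq_or_lt_of_le hz with rfl | hz1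
    · exact block_c hmon hm hdvd
    · have hco : (cyclotomic m ℚ).coeff ((cyclotomic m ℚ).natDegree - 1) =
          -(ArithmeticFunction.moebius m : ℚ) := by
        rw [← nextCoeff_cyclotomic m hm, nextCoeff_of_natDegree_pos (by omega)]
      obtain ⟨M, hM⟩ := good_exists _ hmon z hz0 hz1 (by
        rw [hco]
        rcases ArithmeticFunction.moebius_eq_or m with h | h | h <;> rw [h] <;> norm_num)
      exact block_a hmon hm hdvd hM

lemma choose_z {ι : Type} (cap : ι → ℕ) (s : Finset ι) : ∀ N, N ≤ ∑ i ∈ s, cap i →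
    ∃ z : ι → ℕ, (∀ i, z i ≤ cap i) ∧ ∑ i ∈ s, z i = N := by
  classical
  induction s using Finset.induction_on with
  | empty => intro N hN; exact ⟨fun _ => 0, fun _ => Nat.zero_le _, by simp at hN ⊢; omega⟩
  | insert a s ha ih =>
    intro N hN
    rw [Finset.sum_insert ha] at hN
    obtain ⟨z, hz, hs⟩ := ih (N - min N (cap a)) (by omega)
    refine ⟨Function.update z a (min N (cap a)), fun i => ?_, ?_⟩
    · by_cases hi : i = a
      · subst hi; simp
      · simp [hi, hz i]
    · rw [Finset.sum_insert ha, Function.update_self]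
      have : ∑ i ∈ s, Function.update z a (min N (cap a)) i = ∑ i ∈ s, z i :=
        Finset.sum_congr rfl fun i hi => Function.update_of_ne (by rintro rfl; exact ha hi) _ _
      rw [this, hs]; omega

lemma root_X : AdjoinRoot.root (X : ℚ[X]) = 0 := by
  rw [← AdjoinRoot.mk_X]; exact AdjoinRoot.mk_self

lemma exists_constCoeff {q : ℚ[X]} (h : X ∣ q) : ∃ ψ : AdjoinRoot q →ₗ[ℚ] ℚ,
    ψ 1 = 1 ∧ ∀ u, ψ (AdjoinRoot.root q * u) = 0 := by
  obtain ⟨r, rfl⟩ := h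
  obtain ⟨ψ, hψ⟩ := exists_lift_adjoinRoot (X * r) (lcoeff ℚ 0) (by intro p; simp [mul_assoc])
  refine ⟨ψ, ?_, fun u => ?_⟩
  · rw [← map_one (AdjoinRoot.mk (X * r)), hψ]; simp
  · obtain ⟨p, rfl⟩ := AdjoinRoot.mk_surjective u
    rw [← AdjoinRoot.mk_X, ← map_mul, hψ]; simp

open Classical in
lemma rank_bound {V : Type} [AddCommGroup V] [Module ℚ V] [Module.Finite ℚ V]
    (A : Module.End ℚ V) {ι : Type} [Fintype ι] (q : ι → ℚ[X])
    (e : V ≃ₗ[ℚ] (∀ i, AdjoinRoot (q i))) (he : ∀ v i, e (A v) i = AdjoinRoot.root (q i) * e v i) :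
    Module.finrank ℚ (LinearMap.range A) + Fintype.card {i // X ∣ q i} ≤ Module.finrank ℚ V := by
  choose ψ h1 h2 using fun i : {i // X ∣ q i} => exists_constCoeff i.2
  let Ψ : V →ₗ[ℚ] ({i // X ∣ q i} → ℚ) :=
    LinearMap.pi fun i => (ψ i).comp ((LinearMap.proj i.1).comp e.toLinearMap)
  have hΨ : ∀ v i, Ψ v i = ψ i (e v i.1) := fun _ _ => rfl
  have hs : LinearMap.range Ψ = ⊤ := by
    rw [LinearMap.range_eq_top]
    intro c
    refine ⟨e.symm (fun i => if h : X ∣ q i then c ⟨i, h⟩ • 1 else 0), ?_⟩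
    funext i
    rw [hΨ, e.apply_symm_apply, dif_pos i.2, map_smul, h1]; simp
  have hle : LinearMap.range A ≤ LinearMap.ker Ψ := by
    rintro _ ⟨v, rfl⟩
    rw [LinearMap.mem_ker]
    funext i
    rw [hΨ, he, h2]; rfl
  have h3 := LinearMap.finrank_range_add_finrank_ker Ψ
  rw [hs, finrank_top, Module.finrank_fintype_fun_eq_card] at h3
  have h4 := Submodule.finrank_mono hle
  omega

lemma X_or_monic {q : ℚ[X]} (h : (∃ a, q = X ^ a) ∨ ∃ m, 1 ≤ m ∧ q = cyclotomic m ℚ) : q.Monic := by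
  rcases h with ⟨a, rfl⟩ | ⟨m, hm, rfl⟩
  · exact monic_X_pow a
  · exact cyclotomic.monic m ℚ

open Classical in
lemma TS_main {V : Type} [AddCommGroup V] [Module ℚ V] [Module.Finite ℚ V]
    (A : Module.End ℚ V) (m k : ℕ) (hkm : k < m) (hA : A ^ m = A ^ k)
    (hr : Module.finrank ℚ V ≤ 2 * Module.finrank ℚ (LinearMap.range A)) : TS A := by
  obtain ⟨ι, hι, q, hq, e, he⟩ := decomposition A m k hkm hA
  have hmon : ∀ i, (q i).Monic := fun i => X_or_monic (hq i)
  have hfin : ∀ i, Module.Finite ℚ (AdjoinRoot (q i)) := fun i => finite_adjoinRoot' (hmon i)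
  have hb := rank_bound A q e he
  have hdim : Module.finrank ℚ V = ∑ i, (q i).natDegree := by
    rw [e.finrank_eq, Module.finrank_pi_fintype]
    exact Finset.sum_congr rfl fun i _ => finrank_adjoinRoot' (hmon i)
  let cap : ι → ℕ := fun i => (q i).natDegree - (if X ∣ q i then 2 else 0)
  have hcap : ∀ i, (q i).natDegree + (if q i = X then 1 else 0) = cap i + 2 * (if X ∣ q i then 1 else 0) := by
    intro i
    by_cases h1 : q i = X
    · simp only [cap, h1]; simp
    · rw [if_neg h1]
      by_cases h2 : X ∣ q i
      · simp only [cap, if_pos h2]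
        have h3 : 2 ≤ (q i).natDegree := by
          rcases hq i with ⟨a, ha⟩ | ⟨m, hm, hm'⟩
          · rw [ha, natDegree_X_pow]
            by_contra h4
            have h5 : a = 0 ∨ a = 1 := by omega
            rcases h5 with rfl | rfl
            · rw [ha, pow_zero] at h2
              exact not_isUnit_X (isUnit_of_dvd_one h2)
            · exact h1 (by rw [ha, pow_one])
          · rw [hm'] at h2
            exact absurd h2 (X_not_dvd_cyclotomic.resolve_right (by omega))
        omega
      · simp only [cap, if_neg h2]; omega
  have hsum : ∑ i, (q i).natDegree + Fintype.card {i // q i = X} =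
      ∑ i, cap i + 2 * Fintype.card {i // X ∣ q i} := by
    rw [Fintype.card_subtype, Fintype.card_subtype, Finset.card_filter, Finset.card_filter, Finset.mul_sum,
      ← Finset.sum_add_distrib, ← Finset.sum_add_distrib]
    exact Finset.sum_congr rfl fun i _ => hcap i
  have hcapJ : ∑ i : {i // q i ≠ X}, cap i.1 = ∑ i, cap i := by
    rw [← Finset.sum_subtype (Finset.univ.filter fun i => q i ≠ X) (by simp) cap, Finset.sum_filter]
    refine Finset.sum_congr rfl fun i _ => ?_
    by_cases h1 : q i = X
    · simp only [cap, h1]; simp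
    · simp only [if_pos (show q i ≠ X from h1)]
  obtain ⟨z, hz, hzs⟩ := choose_z (fun i : {i // q i ≠ X} => cap i.1) Finset.univ
    (Fintype.card {i // q i = X}) (by rw [hcapJ]; omega)
  have hfr : Module.finrank ℚ (∀ i : {i // q i = X}, AdjoinRoot (q i.1)) =
      Module.finrank ℚ (∀ j : {i // q i ≠ X}, (Fin (z j) → ℚ)) := by
    rw [Module.finrank_pi_fintype, Module.finrank_pi_fintype]
    simp only [Module.finrank_fintype_fun_eq_card, Fintype.card_fin]
    rw [hzs]
    have : ∀ i : {i // q i = X}, Module.finrank ℚ (AdjoinRoot (q i.1)) = 1 := by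
      intro i
      rw [finrank_adjoinRoot' (hmon i.1), i.2, natDegree_X]
    simp [this]
  let e2 := LinearEquiv.ofFinrankEq _ _ hfr
  let res : V →ₗ[ℚ] (∀ i : {i // q i = X}, AdjoinRoot (q i.1)) :=
    LinearMap.pi fun i => (LinearMap.proj i.1).comp e.toLinearMap
  have hres : ∀ v i, res v i = e v i.1 := fun _ _ => rfl
  let L : V →ₗ[ℚ] (∀ j : {i // q i ≠ X}, (AdjoinRoot (q j.1) × (Fin (z j) → ℚ))) :=
    LinearMap.pi fun j => LinearMap.prod ((LinearMap.proj j.1).comp e.toLinearMap)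
      ((LinearMap.proj j).comp (e2.toLinearMap.comp res))
  have hL : ∀ v j, L v j = (e v j.1, e2 (res v) j) := fun _ _ => rfl
  have hbij : Function.Bijective L := by
    constructor
    · intro v w hvw
      have h1 : e2 (res v) = e2 (res w) := by
        funext j
        have := congrFun hvw j
        rw [hL, hL] at this
        exact congrArg Prod.snd this
      have h2 := e2.injective h1
      apply e.injective
      funext i
      by_cases hi : q i = X
      · exact congrFun h2 ⟨i, hi⟩
      · have := congrFun hvw ⟨i, hi⟩
        rw [hL, hL] at this
        exact congrArg Prod.fst this
    · intro y
      let w0 := e2.symm (fun j => (y j).2)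
      let w : ∀ i, AdjoinRoot (q i) := fun i =>
        if h : q i = X then w0 ⟨i, h⟩ else (y ⟨i, h⟩).1
      refine ⟨e.symm w, ?_⟩
      have hw : res (e.symm w) = w0 := by
        funext i
        rw [hres, e.apply_symm_apply]
        simp only [w, dif_pos i.2]
      funext j
      rw [hL, hw, e.apply_symm_apply]
      refine Prod.ext ?_ ?_
      · simp only [w, dif_neg j.2]
      · simp [w0]
  refine TS.conj (LinearEquiv.ofBijective L hbij) ?_ (TS.pi
    (fun j : {i // q i ≠ X} => (tmul (q j.1)).prodMap (0 : Module.End ℚ (Fin (z j) → ℚ)))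
    (fun j => block_all (hq j.1) j.2 (hz j)))
  intro v
  have h0 : res (A v) = 0 := by
    funext i
    have : AdjoinRoot.root (q i.1) = 0 := by
      have h9 := i.2
      generalize q i.1 = p at h9
      subst h9
      exact root_X
    rw [hres, he, this, zero_mul]; rfl
  funext j
  change L (A v) j = ((tmul (q j.1)).prodMap (0 : Module.End ℚ (Fin (z j) → ℚ))) (L v j)
  rw [hL, hL, h0, he, map_zero]
  rfl

theorem periodic_eq_torsion_add_squareZero_rat
    {n : ℕ} (A : Matrix (Fin n) (Fin n) ℚ)
    (hA : ∃ m k : ℕ, 1 ≤ k ∧ k < m ∧ A ^ m = A ^ k)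
    (hrank : n ≤ 2 * A.rank) :
    ∃ T N : Matrix (Fin n) (Fin n) ℚ,
      IsUnit T ∧ (∃ s : ℕ, 1 ≤ s ∧ T ^ s = 1) ∧ N ^ 2 = 0 ∧
      A = T + N := by
  obtain ⟨m, k, -, hkm, hAmk⟩ := hA
  let Φ : Matrix (Fin n) (Fin n) ℚ ≃ₐ[ℚ] Module.End ℚ (Fin n → ℚ) := Matrix.toLinAlgEquiv'
  obtain ⟨T, N, ⟨s, hs, hTs⟩, hN, hTN⟩ := TS_main (Φ A) m k hkm (by rw [← map_pow, ← map_pow, hAmk]) (by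
    rw [Module.finrank_fintype_fun_eq_card, Fintype.card_fin]
    exact hrank)
  have hT1 : (Φ.symm T) ^ s = 1 := by rw [← map_pow, hTs, map_one]
  refine ⟨Φ.symm T, Φ.symm N, IsUnit.of_pow_eq_one hT1 (by omega), ⟨s, hs, hT1⟩, ?_, ?_⟩
  · rw [sq, ← map_mul, hN, map_zero]
  · rw [← map_add, ← hTN, Φ.symm_apply_apply]
end
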